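/- Let q be a prime power and m ≥ 0, and let Q := F_q[x,y]/(x^{q^m}, y^{q^m}) with its GL_2(F_q)-action. Then for each of the two compositions α = (2) and α = (1,1) of n = 2 (so that P_{(2)} = GL_2(F_q) and P_{(1,1)} is the Borel subgroup of upper-triangular matrices), the Hilbert series of the P_α-fixed subalgebra satisfies Hilb(Q^{P_α}, t) = C_{α,m}(t) as an identity in ℤ[[t]]. -/

import Mathlib

open Finset Matrix MvPolynomial PowerSeries

/-- Partial sums: `psum f i = f 0 + f 1 + ⋯ + f (i-1)`. -/
def psum (f : ℕ → ℕ) (i : ℕ) : ℕ := ∑ j ∈ Finset.range i, f j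

/-- The `(q,t)`-multinomial `[m; β, m−|β|]_{q,t}` as a power series in `ℚ[[t]]`. -/
noncomputable def qtMult (q m ℓ : ℕ) (β : ℕ → ℕ) : PowerSeries ℚ :=
  (∏ j ∈ Finset.range (psum β ℓ),
      (1 - (PowerSeries.X : PowerSeries ℚ) ^ (q ^ m - q ^ j))) *
    ∏ i ∈ Finset.range ℓ, ∏ j ∈ Finset.range (β i),
      (1 - (PowerSeries.X : PowerSeries ℚ) ^ (q ^ psum β (i + 1) - q ^ (psum β i + j)))⁻¹

/-- The exponent `e(m,α,β) = Σᵢ (αᵢ − βᵢ)(q^m − q^{Bᵢ})`. -/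
def eexp (q m ℓ : ℕ) (α β : ℕ → ℕ) : ℕ :=
  ∑ i ∈ Finset.range ℓ, (α i - β i) * (q ^ m - q ^ psum β (i + 1))

/-- Extend a tuple `β : Fin ℓ → ℕ` to a function `ℕ → ℕ` by zero. -/
def extfn (ℓ : ℕ) (β : Fin ℓ → ℕ) : ℕ → ℕ := fun i => if h : i < ℓ then β ⟨i, h⟩ else 0

/-- `C_{α,m}(t) = Σ_{β ≤ α, |β| ≤ m} t^{e(m,α,β)} [m; β, m−|β|]_{q,t}`. -/
noncomputable def Cser (q m ℓ : ℕ) (α : ℕ → ℕ) : PowerSeries ℚ :=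
  ∑ β ∈ (Finset.Icc (0 : Fin ℓ → ℕ) fun i => α i).filter fun β => ∑ i, β i ≤ m,
    (PowerSeries.X : PowerSeries ℚ) ^ eexp q m ℓ α (extfn ℓ β) * qtMult q m ℓ (extfn ℓ β)

/-- The action of a matrix `g` on `F_q[x_1,…,x_n]` by linear substitution of variables. -/
noncomputable def lsub {n : ℕ} {Fq : Type} [Field Fq] (g : Matrix (Fin n) (Fin n) Fq) :
    MvPolynomial (Fin n) Fq →ₐ[Fq] MvPolynomial (Fin n) Fq :=
  MvPolynomial.aeval fun i => ∑ j, MvPolynomial.C (g i j) * MvPolynomial.X j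

/-- The parabolic subgroup `P_α ⊆ GL_n(F_q)`. -/
def Pa (Fq : Type) [Field Fq] (n ℓ : ℕ) (α : ℕ → ℕ) : Set (GL (Fin n) Fq) :=
  {g | ∀ r s : Fin n, ∀ i ≤ ℓ, (s : ℕ) < psum α i → psum α i ≤ (r : ℕ) →
        (g : Matrix (Fin n) (Fin n) Fq) r s = 0}

/-- The Frobenius power `𝔪^{[Q]} = (x_1^Q, …, x_n^Q)` as an `F_q`-submodule. -/
noncomputable def frobPow (Fq : Type) [Field Fq] (n Q : ℕ) :
    Submodule Fq (MvPolynomial (Fin n) Fq) :=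
  Submodule.restrictScalars Fq
    (Ideal.span (Set.range fun i : Fin n => (MvPolynomial.X i : MvPolynomial (Fin n) Fq) ^ Q))

/-- The degree-`d` homogeneous polynomials whose class in `S/𝔪^{[Q]}` is fixed by every
element of `H`. -/
noncomputable def fixDeg (Fq : Type) [Field Fq] (n Q : ℕ) (H : Set (GL (Fin n) Fq)) (d : ℕ) :
    Submodule Fq (MvPolynomial (Fin n) Fq) :=
  MvPolynomial.homogeneousSubmodule (Fin n) Fq d ⊓
    ⨅ g ∈ H,
      Submodule.comap
        ((lsub ((g : GL (Fin n) Fq) : Matrix (Fin n) (Fin n) Fq)).toLinearMap - LinearMap.id)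
        (frobPow Fq n Q)

/-!
Write `q = |F|` and `N = q ^ m`. Scalar matrices confine the invariants of the truncated algebra
`F[x, y] / (x ^ N, y ^ N)` to degrees divisible by `q - 1`. In degrees below `N` these are the
invariants of `F[x, y]`. Multiplication into the socle is a perfect pairing, invariant because `N`
is a power of `q`, and it identifies the invariants in degree `2 (N - 1) - e`, for `e < N`, with
the invariant functionals on forms of degree `e`. The two ranges cover all degrees.

The invariants of `F[x, y]` are counted by restriction to the line `y = 0`: the image is spanned by
the powers of `x ^ (q (q - 1))`, and the kernel is the principal ideal generated by an invariant
`d`, namely `y ^ (q - 1)` for the Borel subgroup and `L ^ (q - 1)` for `GL₂`, where `L` is the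
product of the linear forms up to scalars. Their number in degree `(q - 1) k` is therefore `f k` for
an explicit quasi-polynomial `f`. The same `d` generates the image of the transfer, and transferring
a functional along `d` turns the invariant functionals of degree `e`, modulo those that vanish on
the multiples of `d`, into the invariants of degree `e - 2 deg d`. The functionals vanishing on the
multiples of `d` form a space of dimension at most one.

Finally `f` satisfies a reflection formula that matches the upper range with the continuation of the
lower one, and its second difference with steps `(N - 1) / (q - 1)` and `(N - q) / (q - 1)`
vanishes; summation of the resulting series gives the `(q, t)`-multinomial formula.
-/

section HomogeneousComponent

variable {σ R : Type*} [CommSemiring R]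

lemma linearMap_ext_of_isHomogeneous {M : Type*} [AddCommMonoid M] [Module R M]
    {φ ψ : MvPolynomial σ R →ₗ[R] M} (h : ∀ d f, f.IsHomogeneous d → φ f = ψ f) : φ = ψ := by
  refine LinearMap.ext fun f => ?_
  rw [← sum_homogeneousComponent f, map_sum, map_sum]
  exact Finset.sum_congr rfl fun d _ => h d _ (homogeneousComponent_isHomogeneous d f)

lemma homogeneousComponent_of_isHomogeneous {d : ℕ} {f : MvPolynomial σ R}
    (hf : f.IsHomogeneous d) (e : ℕ) : homogeneousComponent e f = if e = d then f else 0 :=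
  homogeneousComponent_of_mem hf

lemma homogeneousComponent_mul_of_isHomogeneous {d : ℕ} {f : MvPolynomial σ R}
    (hf : f.IsHomogeneous d) (e : ℕ) (h : MvPolynomial σ R) :
    homogeneousComponent (d + e) (f * h) = f * homogeneousComponent e h := by
  suffices homogeneousComponent (d + e) ∘ₗ LinearMap.mulLeft R f =
      LinearMap.mulLeft R f ∘ₗ homogeneousComponent e from LinearMap.congr_fun this h
  refine linearMap_ext_of_isHomogeneous fun k h hh => ?_
  simp only [LinearMap.comp_apply, LinearMap.mulLeft_apply,
    homogeneousComponent_of_isHomogeneous hh, homogeneousComponent_of_isHomogeneous (hf.mul hh),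
    add_right_inj, mul_ite, mul_zero]

lemma eq_zero_of_dvd_of_isHomogeneous {σ R : Type*} [CommRing R] [IsDomain R] {δ e : ℕ}
    {d f : MvPolynomial σ R} (hd : d.IsHomogeneous δ) (hf : f.IsHomogeneous e) (hlt : e < δ)
    (hdvd : d ∣ f) : f = 0 := by
  obtain ⟨h, rfl⟩ := hdvd
  by_contra hne
  rw [mul_eq_zero, not_or] at hne
  have := totalDegree_mul_of_isDomain hne.1 hne.2
  rw [hf.totalDegree (mul_ne_zero hne.1 hne.2), hd.totalDegree hne.1] at this
  omega

end HomogeneousComponent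

section LinearSubstitution

variable {n : ℕ} {F : Type} [Field F]

lemma lsub_X (g : Matrix (Fin n) (Fin n) F) (i : Fin n) :
    lsub g (X i) = ∑ j, g i j • X j := by
  simp only [lsub, aeval_X, MvPolynomial.smul_eq_C_mul]

lemma lsub_lsub (g h : Matrix (Fin n) (Fin n) F) (f : MvPolynomial (Fin n) F) :
    lsub g (lsub h f) = lsub (h * g) f := by
  suffices (lsub g).comp (lsub h) = lsub (h * g) from DFunLike.congr_fun this f
  ext1 i
  simp only [AlgHom.comp_apply, lsub_X, map_sum, map_smul, Matrix.mul_apply, Finset.smul_sum,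
    Finset.sum_smul, smul_smul]
  exact Finset.sum_comm

lemma lsub_one (f : MvPolynomial (Fin n) F) : lsub 1 f = f := by
  suffices lsub (1 : Matrix (Fin n) (Fin n) F) = AlgHom.id F _ by rw [this, AlgHom.id_apply]
  ext1 i
  simp [lsub_X, Matrix.one_apply]

lemma lsub_lsub_inv (g : GL (Fin n) F) (f : MvPolynomial (Fin n) F) :
    lsub g.1 (lsub g⁻¹.1 f) = f := by
  rw [lsub_lsub, Units.inv_mul, lsub_one]

lemma aeval_lsub {K : Type*} [CommRing K] [Algebra F K] (v : Fin n → K)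
    (g : Matrix (Fin n) (Fin n) F) (f : MvPolynomial (Fin n) F) :
    aeval v (lsub g f) = aeval (g.map (algebraMap F K) *ᵥ v) f := by
  suffices (aeval v).comp (lsub g) = aeval (g.map (algebraMap F K) *ᵥ v) from
    DFunLike.congr_fun this f
  ext1 i
  simp only [AlgHom.comp_apply, lsub_X, map_sum, map_smul, aeval_X, Matrix.mulVec, dotProduct,
    Matrix.map_apply, ← Algebra.smul_def]

lemma isHomogeneous_lsub {d : ℕ} {f : MvPolynomial (Fin n) F} (hf : f.IsHomogeneous d)
    (g : Matrix (Fin n) (Fin n) F) : (lsub g f).IsHomogeneous d := by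
  have h := hf.aeval (n := 1) (fun i => ∑ j, MvPolynomial.C (g i j) * X j) fun i =>
    MvPolynomial.IsHomogeneous.sum _ _ _ fun j _ => isHomogeneous_C_mul_X (g i j) j
  rwa [one_mul] at h

lemma homogeneousComponent_lsub (d : ℕ) (g : Matrix (Fin n) (Fin n) F)
    (f : MvPolynomial (Fin n) F) :
    homogeneousComponent d (lsub g f) = lsub g (homogeneousComponent d f) := by
  suffices homogeneousComponent d ∘ₗ (lsub g).toLinearMap =
      (lsub g).toLinearMap ∘ₗ homogeneousComponent d from LinearMap.congr_fun this f
  refine linearMap_ext_of_isHomogeneous fun e h hh => ?_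
  simp only [LinearMap.comp_apply, AlgHom.toLinearMap_apply,
    homogeneousComponent_of_isHomogeneous hh,
    homogeneousComponent_of_isHomogeneous (isHomogeneous_lsub hh g), apply_ite (lsub g), map_zero]

lemma lsub_diagonal_monomial (c : Fin n → F) (s : Fin n →₀ ℕ) (a : F) :
    lsub (Matrix.diagonal c) (MvPolynomial.monomial s a) =
      (∏ i, c i ^ s i) • MvPolynomial.monomial s a := by
  have hX (i : Fin n) : lsub (Matrix.diagonal c) (X i) = c i • X i := by
    simp [lsub_X, Matrix.diagonal_apply]
  rw [MvPolynomial.monomial_eq, Finsupp.prod_fintype _ _ fun i => pow_zero _, map_mul, algHom_C,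
    map_prod]
  simp only [map_pow, hX, smul_pow, Finset.prod_smul, mul_smul_comm]
  rfl

lemma coeff_lsub_diagonal (c : Fin n → F) (s : Fin n →₀ ℕ) (f : MvPolynomial (Fin n) F) :
    MvPolynomial.coeff s (lsub (Matrix.diagonal c) f) =
      (∏ i, c i ^ s i) * MvPolynomial.coeff s f := by
  suffices lcoeff F s ∘ₗ (lsub (Matrix.diagonal c)).toLinearMap = (∏ i, c i ^ s i) • lcoeff F s
    from LinearMap.congr_fun this f
  refine MvPolynomial.linearMap_ext fun t => LinearMap.ext fun a => ?_
  simp only [LinearMap.comp_apply, AlgHom.toLinearMap_apply, lsub_diagonal_monomial, map_smul,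
    LinearMap.smul_apply, lcoeff_apply, MvPolynomial.coeff_monomial, smul_eq_mul]
  split_ifs with h
  · rw [h]
  · rw [mul_zero, mul_zero]

lemma lsub_scalar (c : F) {d : ℕ} {f : MvPolynomial (Fin n) F} (hf : f.IsHomogeneous d) :
    lsub (Matrix.scalar (Fin n) c) f = c ^ d • f := by
  ext s
  rw [Matrix.scalar_apply, coeff_lsub_diagonal, MvPolynomial.coeff_smul, smul_eq_mul,
    Finset.prod_pow_eq_pow_sum, ← Finsupp.degree_eq_sum]
  by_cases hs : s.degree = d
  · rw [hs]
  · rw [hf.coeff_eq_zero hs, mul_zero, mul_zero]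

end LinearSubstitution

section Invariants

variable {n : ℕ} {F : Type} [Field F] (H : Subgroup (GL (Fin n) F))

/-- The algebra `F[x₁, …, xₙ]^H` of polynomials fixed by `H`. -/
noncomputable def invariantSubalgebra : Subalgebra F (MvPolynomial (Fin n) F) :=
  ⨅ g ∈ H, AlgHom.equalizer (lsub g.1) (AlgHom.id F _)

/-- The degree `d` part of `F[x₁, …, xₙ]^H`. -/
noncomputable def invariantForms (d : ℕ) : Submodule F (MvPolynomial (Fin n) F) :=
  homogeneousSubmodule (Fin n) F d ⊓ (invariantSubalgebra H).toSubmodule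

/-- The `H`-invariant linear functionals on the forms of degree `d`, encoded as functionals on all
polynomials that only depend on the homogeneous component of degree `d`. -/
noncomputable def invariantFunctionals (d : ℕ) :
    Submodule F (Module.Dual F (MvPolynomial (Fin n) F)) where
  carrier := {φ | (∀ f, φ (homogeneousComponent d f) = φ f) ∧
    ∀ g ∈ H, ∀ f, φ (lsub g.1 f) = φ f}
  add_mem' hφ hψ := ⟨fun f => by simp [hφ.1, hψ.1], fun g hg f => by simp [hφ.2 g hg, hψ.2 g hg]⟩
  zero_mem' := ⟨fun _ => rfl, fun _ _ _ => rfl⟩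
  smul_mem' c φ hφ := ⟨fun f => by simp [hφ.1], fun g hg f => by simp [hφ.2 g hg]⟩

/-- The invariant functionals of degree `k` that vanish on the multiples of `d`. -/
noncomputable def annihilatingFunctionals (d : MvPolynomial (Fin n) F) (k : ℕ) :
    Submodule F (Module.Dual F (MvPolynomial (Fin n) F)) :=
  invariantFunctionals H k ⊓ LinearMap.ker (LinearMap.mulLeft F d).dualMap

variable {H}

lemma mem_invariantSubalgebra {f : MvPolynomial (Fin n) F} :
    f ∈ invariantSubalgebra H ↔ ∀ g ∈ H, lsub g.1 f = f := by
  simp [invariantSubalgebra, Algebra.mem_iInf, AlgHom.mem_equalizer]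

lemma mem_invariantForms {d : ℕ} {f : MvPolynomial (Fin n) F} :
    f ∈ invariantForms H d ↔ f.IsHomogeneous d ∧ f ∈ invariantSubalgebra H :=
  Iff.rfl

lemma mem_invariantFunctionals {d : ℕ} {φ : Module.Dual F (MvPolynomial (Fin n) F)} :
    φ ∈ invariantFunctionals H d ↔ (∀ f, φ (homogeneousComponent d f) = φ f) ∧
      ∀ g ∈ H, ∀ f, φ (lsub g.1 f) = φ f :=
  Iff.rfl

lemma apply_eq_zero_of_mem_invariantFunctionals {d e : ℕ}
    {φ : Module.Dual F (MvPolynomial (Fin n) F)} (hφ : φ ∈ invariantFunctionals H d)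
    {f : MvPolynomial (Fin n) F} (hf : f.IsHomogeneous e) (hde : d ≠ e) : φ f = 0 := by
  rw [← hφ.1, homogeneousComponent_of_mem hf, if_neg hde, map_zero]

lemma mem_annihilatingFunctionals {d : MvPolynomial (Fin n) F} {k : ℕ}
    {φ : Module.Dual F (MvPolynomial (Fin n) F)} :
    φ ∈ annihilatingFunctionals H d k ↔ φ ∈ invariantFunctionals H k ∧ ∀ f, φ (d * f) = 0 :=
  and_congr_right fun _ => LinearMap.ext_iff

lemma exists_mem_invariantForms_mul_eq {δ k : ℕ} {d f : MvPolynomial (Fin n) F} (hd0 : d ≠ 0)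
    (hd : d ∈ invariantForms H δ) (hf : f ∈ invariantForms H (δ + k)) (hdvd : d ∣ f) :
    ∃ h ∈ invariantForms H k, d * h = f := by
  obtain ⟨h, rfl⟩ := hdvd
  have hcomp : homogeneousComponent k h = h := mul_left_cancel₀ hd0 <| by
    rw [← homogeneousComponent_mul_of_isHomogeneous hd.1, homogeneousComponent_eq_self hf.1]
  refine ⟨h, mem_invariantForms.2 ⟨?_, mem_invariantSubalgebra.2 fun g hg => ?_⟩, rfl⟩
  · exact hcomp ▸ homogeneousComponent_isHomogeneous k h
  · have hdh := mem_invariantSubalgebra.1 hf.2 g hg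
    rw [map_mul, mem_invariantSubalgebra.1 hd.2 g hg] at hdh
    exact mul_left_cancel₀ hd0 hdh

instance finite_homogeneousSubmodule (d : ℕ) :
    Module.Finite F (homogeneousSubmodule (Fin n) F d) :=
  Module.Finite.iff_fg.mpr (homogeneousSubmodule_fg _ F d)

instance finite_invariantForms (d : ℕ) : Module.Finite F (invariantForms H d) :=
  Submodule.finiteDimensional_of_le (S₂ := homogeneousSubmodule (Fin n) F d) inf_le_left

instance finite_invariantFunctionals (d : ℕ) : Module.Finite F (invariantFunctionals H d) := by
  let restrict : invariantFunctionals H d →ₗ[F] Module.Dual F (homogeneousSubmodule (Fin n) F d) :=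
    (homogeneousSubmodule (Fin n) F d).subtype.dualMap.comp (invariantFunctionals H d).subtype
  refine Module.Finite.of_injective restrict ((injective_iff_map_eq_zero _).2 ?_)
  intro φ hφ
  ext1
  refine LinearMap.ext fun f => ?_
  rw [← φ.2.1]
  exact LinearMap.congr_fun hφ ⟨_, homogeneousComponent_isHomogeneous d f⟩

end Invariants

section SocleFunctional

variable {n : ℕ} {F : Type} [Field F]

/-- The exponent `(N - 1, …, N - 1)` of the monomial spanning the socle of
`F[x₁, …, xₙ] / (x₁^N, …, xₙ^N)`. -/
noncomputable def socleExponent (n N : ℕ) : Fin n →₀ ℕ :=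
  Finsupp.equivFunOnFinite.symm fun _ => N - 1

/-- The coefficient of the socle monomial of `F[x₁, …, xₙ] / (x₁^N, …, xₙ^N)`; it makes this
quotient a symmetric algebra. -/
noncomputable def socleFunctional (F : Type) [Field F] (n N : ℕ) :
    Module.Dual F (MvPolynomial (Fin n) F) :=
  lcoeff F (socleExponent n N)

lemma socleExponent_apply (N : ℕ) (i : Fin n) : socleExponent n N i = N - 1 := rfl

lemma degree_socleExponent (N : ℕ) : (socleExponent n N).degree = n * (N - 1) := by
  simp [Finsupp.degree_eq_sum, socleExponent_apply]

lemma socleFunctional_apply (N : ℕ) (f : MvPolynomial (Fin n) F) :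
    socleFunctional F n N f = MvPolynomial.coeff (socleExponent n N) f := rfl

lemma lt_of_le_socleExponent {N : ℕ} (hN : 0 < N) {s : Fin n →₀ ℕ} (hs : s ≤ socleExponent n N)
    (i : Fin n) : s i < N := by
  have := hs i
  rw [socleExponent_apply] at this
  omega

lemma mem_frobPow_iff {N : ℕ} {f : MvPolynomial (Fin n) F} :
    f ∈ frobPow F n N ↔ ∀ s : Fin n →₀ ℕ, (∀ i, s i < N) → MvPolynomial.coeff s f = 0 := by
  have hgen : (Set.range fun i : Fin n => (X i : MvPolynomial (Fin n) F) ^ N) =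
      (fun s => MvPolynomial.monomial s (1 : F)) '' Set.range fun i => Finsupp.single i N := by
    simp only [← Set.range_comp, Function.comp_def, MvPolynomial.X_pow_eq_monomial]
  simp only [frobPow, Submodule.restrictScalars_mem, hgen, mem_ideal_span_monomial_image,
    Set.exists_range_iff, Finsupp.single_le_iff, MvPolynomial.mem_support_iff]
  refine forall_congr' fun s => ?_
  rw [← not_imp_comm, not_exists]
  simp only [not_le]

lemma mul_mem_frobPow {N : ℕ} {f : MvPolynomial (Fin n) F} (hf : f ∈ frobPow F n N)
    (h : MvPolynomial (Fin n) F) : f * h ∈ frobPow F n N :=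
  Ideal.mul_mem_right h (Ideal.span (Set.range fun i : Fin n => (X i : MvPolynomial _ F) ^ N)) hf

lemma mem_frobPow_iff_socleFunctional {N : ℕ} (hN : 0 < N) {f : MvPolynomial (Fin n) F} :
    f ∈ frobPow F n N ↔ ∀ h, socleFunctional F n N (f * h) = 0 := by
  refine ⟨fun hf h => mem_frobPow_iff.1 (mul_mem_frobPow hf h) _
    (lt_of_le_socleExponent hN le_rfl), fun h => mem_frobPow_iff.2 fun s hs => ?_⟩
  have hle : s ≤ socleExponent n N := fun i => Nat.le_sub_one_of_lt (hs i)
  have := h (MvPolynomial.monomial (socleExponent n N - s) 1)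
  rwa [socleFunctional_apply, MvPolynomial.coeff_mul_monomial', if_pos tsub_le_self,
    tsub_tsub_cancel_of_le hle, mul_one] at this

lemma eq_zero_of_isHomogeneous_of_mem_frobPow {N d : ℕ} (hd : d < N) {f : MvPolynomial (Fin n) F}
    (hf : f.IsHomogeneous d) (hmem : f ∈ frobPow F n N) : f = 0 := by
  ext s
  by_contra hs
  have hdeg : s.degree = d := of_not_not fun h => hs (hf.coeff_eq_zero h)
  exact hs (mem_frobPow_iff.1 hmem s fun i =>
    ((Finsupp.le_degree i s).trans_eq hdeg).trans_lt hd)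

lemma mem_frobPow_of_lt_degree {N d : ℕ} (hd : n * (N - 1) < d) {f : MvPolynomial (Fin n) F}
    (hf : f.IsHomogeneous d) : f ∈ frobPow F n N := by
  refine mem_frobPow_iff.2 fun s hs => hf.coeff_eq_zero ?_
  have : s.degree ≤ (socleExponent n N).degree :=
    Finsupp.degree_mono fun i => Nat.le_sub_one_of_lt (hs i)
  rw [degree_socleExponent] at this
  omega

end SocleFunctional

section SocleInvariance

variable {n : ℕ} {F : Type} [Field F]

lemma sum_pow_eq_ite {K : Type*} [Field K] [Fintype K] {i : ℕ} (hi : i ≠ 0) :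
    ∑ x : K, x ^ i = if Fintype.card K - 1 ∣ i then -1 else 0 := by
  classical
  rw [← FiniteField.sum_pow_units K i, ← Finset.add_sum_erase _ _ (Finset.mem_univ (0 : K)),
    zero_pow hi, zero_add]
  exact (Finset.sum_bij (fun (u : Kˣ) _ => (u : K)) (fun u _ => by simp)
    (fun u _ v _ h => Units.ext h)
    (fun x hx => ⟨Units.mk0 x (Finset.ne_of_mem_erase hx), Finset.mem_univ _, rfl⟩)
    fun _ _ => rfl).symm

lemma sum_prod_pow {ι K : Type*} [Fintype ι] [DecidableEq ι] [CommRing K] [Fintype K]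
    (s : ι → ℕ) : ∑ v : ι → K, ∏ i, v i ^ s i = ∏ i, ∑ x : K, x ^ s i := by
  rw [Finset.prod_univ_sum, Fintype.piFinset_univ]

/-- If the exponents are not all equal to `|K| - 1`, one of them is smaller, and the corresponding
power sum over `K` vanishes. -/
lemma sum_prod_pow_eq_ite {K : Type*} [Field K] [Fintype K] {s : Fin n →₀ ℕ}
    (hs : s.degree = n * (Fintype.card K - 1)) :
    ∑ v : Fin n → K, ∏ i, v i ^ s i =
      if s = socleExponent n (Fintype.card K) then (-1) ^ n else 0 := by
  classical
  rw [sum_prod_pow]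
  split_ifs with h
  · have hcard : Fintype.card K - 1 ≠ 0 := Nat.sub_ne_zero_of_lt Fintype.one_lt_card
    simp [h, socleExponent_apply, sum_pow_eq_ite hcard]
  · obtain ⟨i, hi⟩ : ∃ i, s i < Fintype.card K - 1 := by
      by_contra! hge
      have hle : socleExponent n (Fintype.card K) ≤ s := hge
      have hadd := map_add (Finsupp.degree (R := ℕ)) (s - socleExponent n (Fintype.card K))
        (socleExponent n (Fintype.card K))
      rw [tsub_add_cancel_of_le hle, hs, degree_socleExponent, right_eq_add,
        Finsupp.degree_eq_zero_iff, tsub_eq_zero_iff_le] at hadd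
      exact h (le_antisymm hadd hle)
    exact Finset.prod_eq_zero (Finset.mem_univ i) (FiniteField.sum_pow_lt_card_sub_one K _ hi)

lemma sum_aeval_eq_socleFunctional {K : Type*} [Field K] [Fintype K] [Algebra F K]
    {f : MvPolynomial (Fin n) F} (hf : f.IsHomogeneous (n * (Fintype.card K - 1))) :
    ∑ v : Fin n → K, aeval v f =
      algebraMap F K ((-1) ^ n * socleFunctional F n (Fintype.card K) f) := by
  have hterm (s) (hs : s ∈ f.support) :
      ∑ v : Fin n → K, algebraMap F K (MvPolynomial.coeff s f) * ∏ i, v i ^ s i =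
        if s = socleExponent n (Fintype.card K) then
          algebraMap F K (MvPolynomial.coeff s f) * (-1) ^ n else 0 := by
    have hdeg : s.degree = n * (Fintype.card K - 1) :=
      of_not_not fun h => MvPolynomial.mem_support_iff.1 hs (hf.coeff_eq_zero h)
    rw [← Finset.mul_sum, sum_prod_pow_eq_ite hdeg, mul_ite, mul_zero]
  simp only [aeval_def, MvPolynomial.eval₂_eq']
  rw [Finset.sum_comm, Finset.sum_congr rfl hterm, Finset.sum_ite_eq', socleFunctional_apply]
  split_ifs with h
  · simp [mul_comm]
  · simp [MvPolynomial.notMem_support_iff.1 h]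

/-- The points of `Kⁿ` are permuted by `GL_n(F)`. -/
lemma sum_aeval_lsub {K : Type*} [Field K] [Fintype K] [Algebra F K] (g : GL (Fin n) F)
    (f : MvPolynomial (Fin n) F) :
    ∑ v : Fin n → K, aeval v (lsub g.1 f) = ∑ v : Fin n → K, aeval v f := by
  simp only [aeval_lsub]
  have hinj : Function.Injective (g.1.map (algebraMap F K)).mulVec :=
    Matrix.mulVec_injective_iff_isUnit.2 (g.isUnit.map (algebraMap F K).mapMatrix)
  exact (Finite.injective_iff_bijective.1 hinj).sum_comp fun v => aeval v f

lemma exists_fieldExtension_card_eq_pow (F : Type) [Field F] [Fintype F] {m : ℕ} (hm : m ≠ 0) :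
    ∃ (K : Type) (_ : Field K) (_ : Fintype K) (_ : Algebra F K),
      Fintype.card K = Fintype.card F ^ m := by
  obtain ⟨p, _⟩ := CharP.exists F
  have : Fact p.Prime := ⟨CharP.char_is_prime F p⟩
  have : NeZero m := ⟨hm⟩
  have := Fintype.ofFinite (FiniteField.Extension F p m)
  exact ⟨FiniteField.Extension F p m, inferInstance, inferInstance, inferInstance, by
    rw [Fintype.card_eq_nat_card, FiniteField.natCard_extension, Nat.card_eq_fintype_card]⟩

lemma socleFunctional_homogeneousComponent (N : ℕ) (f : MvPolynomial (Fin n) F) :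
    socleFunctional F n N (homogeneousComponent (n * (N - 1)) f) = socleFunctional F n N f := by
  rw [socleFunctional_apply, socleFunctional_apply, coeff_homogeneousComponent,
    if_pos (degree_socleExponent N)]

lemma socleFunctional_lsub [Fintype F] (m : ℕ) (g : GL (Fin n) F) (f : MvPolynomial (Fin n) F) :
    socleFunctional F n (Fintype.card F ^ m) (lsub g.1 f) =
      socleFunctional F n (Fintype.card F ^ m) f := by
  rw [← socleFunctional_homogeneousComponent, homogeneousComponent_lsub,
    ← socleFunctional_homogeneousComponent _ f]
  rcases eq_or_ne m 0 with rfl | hm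
  · rw [pow_zero, Nat.sub_self, mul_zero, homogeneousComponent_zero, algHom_C]
    rfl
  · have hf := homogeneousComponent_isHomogeneous (n * (Fintype.card F ^ m - 1)) f
    generalize homogeneousComponent (n * (Fintype.card F ^ m - 1)) f = f at hf ⊢
    obtain ⟨K, _, _, _, hK⟩ := exists_fieldExtension_card_eq_pow F hm
    rw [← hK] at hf ⊢
    have hsum := sum_aeval_lsub (K := K) g f
    rw [sum_aeval_eq_socleFunctional hf, sum_aeval_eq_socleFunctional (isHomogeneous_lsub hf _),
      (algebraMap F K).injective.eq_iff] at hsum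
    exact mul_left_cancel₀ (pow_ne_zero n (neg_ne_zero.2 one_ne_zero)) hsum

end SocleInvariance

section TruncatedInvariants

variable {n : ℕ} {F : Type} [Field F] {H : Subgroup (GL (Fin n) F)}

/-- The degree `d` part of the `H`-fixed subalgebra of `F[x₁, …, xₙ] / (x₁^N, …, xₙ^N)`. -/
noncomputable def truncatedInvariants (N : ℕ) (H : Subgroup (GL (Fin n) F)) (d : ℕ) :
    Submodule F (MvPolynomial (Fin n) F ⧸ frobPow F n N) :=
  (fixDeg F n N H d).map (frobPow F n N).mkQ

lemma mem_fixDeg {N d : ℕ} {f : MvPolynomial (Fin n) F} :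
    f ∈ fixDeg F n N H d ↔ f.IsHomogeneous d ∧ ∀ g ∈ H, lsub g.1 f - f ∈ frobPow F n N := by
  simp [fixDeg, mem_homogeneousSubmodule]

instance finite_fixDeg (N d : ℕ) : Module.Finite F (fixDeg F n N H d) :=
  Submodule.finiteDimensional_of_le (S₂ := homogeneousSubmodule (Fin n) F d) inf_le_left

lemma finrank_map_mkQ_of_surjective {V W : Type*} [AddCommGroup V] [Module F V] [AddCommGroup W]
    [Module F W] {M I : Submodule F V} [Module.Finite F M] {T : M →ₗ[F] W}
    (hT : Function.Surjective T) (hker : ∀ x : M, T x = 0 ↔ (x : V) ∈ I) :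
    Module.finrank F (M.map I.mkQ) = Module.finrank F W := by
  have hker' : LinearMap.ker T = LinearMap.ker (I.mkQ.domRestrict M) := by
    ext x
    rw [LinearMap.mem_ker, LinearMap.mem_ker, hker, LinearMap.domRestrict_apply,
      Submodule.mkQ_apply, Submodule.Quotient.mk_eq_zero]
  have hrankT := LinearMap.finrank_range_add_finrank_ker T
  have hrankQ := LinearMap.finrank_range_add_finrank_ker (I.mkQ.domRestrict M)
  rw [LinearMap.range_eq_top.2 hT, finrank_top, hker'] at hrankT
  rw [LinearMap.range_domRestrict] at hrankQ
  omega

lemma truncatedInvariants_eq_bot {N d : ℕ} (h : fixDeg F n N H d ≤ frobPow F n N) :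
    truncatedInvariants N H d = ⊥ := by
  rw [truncatedInvariants, eq_bot_iff, Submodule.map_le_iff_le_comap]
  rwa [Submodule.comap_bot, Submodule.ker_mkQ]

lemma finrank_truncatedInvariants_of_lt_degree {N d : ℕ} (hd : n * (N - 1) < d) :
    Module.finrank F (truncatedInvariants N H d) = 0 := by
  rw [truncatedInvariants_eq_bot fun f hf => mem_frobPow_of_lt_degree hd (mem_fixDeg.1 hf).1,
    finrank_bot]

lemma finrank_truncatedInvariants_of_lt {N d : ℕ} (hd : d < N) :
    Module.finrank F (truncatedInvariants N H d) = Module.finrank F (invariantForms H d) := by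
  have hfix : fixDeg F n N H d = invariantForms H d := by
    ext f
    rw [mem_fixDeg, mem_invariantForms, mem_invariantSubalgebra]
    refine and_congr_right fun hf => forall₂_congr fun g _ => ⟨fun hmem => ?_, fun heq => ?_⟩
    · exact sub_eq_zero.1
        (eq_zero_of_isHomogeneous_of_mem_frobPow hd ((isHomogeneous_lsub hf _).sub hf) hmem)
    · rw [heq, sub_self]
      exact zero_mem _
  rw [truncatedInvariants, hfix]
  refine finrank_map_mkQ_of_surjective (T := LinearMap.id) Function.surjective_id fun f => ?_
  rw [LinearMap.id_apply]
  refine ⟨fun hf => hf ▸ zero_mem _, fun hmem => Subtype.ext ?_⟩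
  exact eq_zero_of_isHomogeneous_of_mem_frobPow hd (mem_invariantForms.1 f.2).1 hmem

/-- A scalar matrix `c` acts on forms of degree `d` as multiplication by `c ^ d`. -/
lemma finrank_truncatedInvariants_of_not_dvd [Fintype F] {N d : ℕ}
    (hH : ∀ c : Fˣ, GeneralLinearGroup.scalar (Fin n) c ∈ H) (hd : ¬ Fintype.card F - 1 ∣ d) :
    Module.finrank F (truncatedInvariants N H d) = 0 := by
  obtain ⟨c, hc⟩ := IsCyclic.exists_generator (α := Fˣ)
  have hcd : (c : F) ^ d ≠ 1 := by
    rw [Ne, ← Units.val_pow_eq_pow_val, Units.val_eq_one, ← orderOf_dvd_iff_pow_eq_one,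
      orderOf_eq_card_of_forall_mem_zpowers hc, Nat.card_units, Nat.card_eq_fintype_card]
    exact hd
  have hle : fixDeg F n N H d ≤ frobPow F n N := fun f hf => by
    obtain ⟨hhom, hfix⟩ := mem_fixDeg.1 hf
    have hlsub : lsub (GeneralLinearGroup.scalar (Fin n) c).1 f - f = ((c : F) ^ d - 1) • f := by
      rw [sub_smul, one_smul, GeneralLinearGroup.coe_scalar, lsub_scalar _ hhom]
    rw [← (frobPow F n N).smul_mem_iff (sub_ne_zero.2 hcd), ← hlsub]
    exact hfix _ (hH c)
  rw [truncatedInvariants_eq_bot hle, finrank_bot]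

end TruncatedInvariants

section SocleDuality

variable {n : ℕ} {F : Type} [Field F] {H : Subgroup (GL (Fin n) F)}

/-- The bilinear form `(f, h) ↦ socleFunctional (f * h)`, whose radical is the Frobenius power. -/
noncomputable def soclePairing (F : Type) [Field F] (n N : ℕ) :
    MvPolynomial (Fin n) F →ₗ[F] Module.Dual F (MvPolynomial (Fin n) F) :=
  (LinearMap.mul F (MvPolynomial (Fin n) F)).compr₂ (socleFunctional F n N)

lemma soclePairing_apply (N : ℕ) (f h : MvPolynomial (Fin n) F) :
    soclePairing F n N f h = socleFunctional F n N (f * h) := rfl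

lemma soclePairing_eq_zero_iff {N : ℕ} (hN : 0 < N) {f : MvPolynomial (Fin n) F} :
    soclePairing F n N f = 0 ↔ f ∈ frobPow F n N := by
  rw [mem_frobPow_iff_socleFunctional hN, LinearMap.ext_iff]
  rfl

lemma soclePairing_homogeneousComponent {N d e : ℕ} (hde : d + e = n * (N - 1))
    {f : MvPolynomial (Fin n) F} (hf : f.IsHomogeneous d) (h : MvPolynomial (Fin n) F) :
    soclePairing F n N f (homogeneousComponent e h) = soclePairing F n N f h := by
  rw [soclePairing_apply, ← homogeneousComponent_mul_of_isHomogeneous hf, hde,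
    socleFunctional_homogeneousComponent, soclePairing_apply]

lemma exists_isHomogeneous_soclePairing_eq {N d e : ℕ} (he : e < N)
    (hde : d + e = n * (N - 1)) {φ : Module.Dual F (MvPolynomial (Fin n) F)}
    (hφ : ∀ f, φ (homogeneousComponent e f) = φ f) :
    ∃ f : MvPolynomial (Fin n) F, f.IsHomogeneous d ∧ soclePairing F n N f = φ := by
  classical
  have hle {s : Fin n →₀ ℕ} (hs : s.degree = e) : s ≤ socleExponent n N := fun i =>
    Nat.le_sub_one_of_lt (((Finsupp.le_degree i s).trans_eq hs).trans_lt he)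
  have hmem (s : Fin n →₀ ℕ) : s ∈ univ.finsuppAntidiag e ↔ s.degree = e := by
    rw [mem_finsuppAntidiag, Finsupp.degree_eq_sum, and_iff_left (subset_univ _)]
  set f : MvPolynomial (Fin n) F := ∑ s ∈ univ.finsuppAntidiag e,
    φ (MvPolynomial.monomial s 1) • MvPolynomial.monomial (socleExponent n N - s) 1
  have hf : f.IsHomogeneous d := by
    refine Submodule.sum_smul_mem (homogeneousSubmodule (Fin n) F d) _ fun s hs => ?_
    refine isHomogeneous_monomial _ ?_
    have hadd := map_add (Finsupp.degree (R := ℕ)) (socleExponent n N - s) s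
    rw [tsub_add_cancel_of_le (hle ((hmem s).1 hs)), degree_socleExponent, (hmem s).1 hs] at hadd
    omega
  refine ⟨f, hf, MvPolynomial.linearMap_ext fun u => LinearMap.ext_ring ?_⟩
  have hu : (MvPolynomial.monomial u (1 : F)).IsHomogeneous u.degree := isHomogeneous_monomial _ rfl
  change soclePairing F n N f (MvPolynomial.monomial u 1) = φ (MvPolynomial.monomial u 1)
  by_cases hue : u.degree = e
  · have hterm (s) (hs : s ∈ univ.finsuppAntidiag e) : socleFunctional F n N
        ((φ (MvPolynomial.monomial s 1) • MvPolynomial.monomial (socleExponent n N - s) 1) *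
          MvPolynomial.monomial u 1) = if s = u then φ (MvPolynomial.monomial s 1) else 0 := by
      rw [smul_mul_assoc, MvPolynomial.monomial_mul, map_smul, socleFunctional_apply, one_mul,
        MvPolynomial.coeff_monomial, smul_eq_mul, mul_ite, mul_one, mul_zero]
      refine if_congr ?_ rfl rfl
      rw [tsub_add_eq_add_tsub (hle ((hmem s).1 hs)), tsub_eq_iff_eq_add_of_le
        ((hle ((hmem s).1 hs)).trans le_self_add), add_right_inj, eq_comm]
    rw [soclePairing_apply, Finset.sum_mul, map_sum, Finset.sum_congr rfl hterm,
      Finset.sum_ite_eq', if_pos ((hmem u).2 hue)]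
  · rw [← soclePairing_homogeneousComponent hde hf, ← hφ,
      homogeneousComponent_of_isHomogeneous hu, if_neg (Ne.symm hue), map_zero, map_zero]

variable [Fintype F]

lemma soclePairing_lsub_lsub (m : ℕ) (g : GL (Fin n) F) (f h : MvPolynomial (Fin n) F) :
    soclePairing F n (Fintype.card F ^ m) (lsub g.1 f) (lsub g.1 h) =
      soclePairing F n (Fintype.card F ^ m) f h := by
  rw [soclePairing_apply, ← map_mul, socleFunctional_lsub, soclePairing_apply]

lemma mem_fixDeg_iff_soclePairing {m d e : ℕ} (hde : d + e = n * (Fintype.card F ^ m - 1))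
    {f : MvPolynomial (Fin n) F} (hf : f.IsHomogeneous d) :
    f ∈ fixDeg F n (Fintype.card F ^ m) H d ↔
      soclePairing F n (Fintype.card F ^ m) f ∈ invariantFunctionals H e := by
  have hN : 0 < Fintype.card F ^ m := pow_pos Fintype.card_pos m
  simp only [mem_fixDeg, mem_invariantFunctionals, hf, soclePairing_homogeneousComponent hde hf,
    implies_true, true_and]
  refine ⟨fun hfix g hg h => ?_, fun hinv g hg => ?_⟩
  · have hmem := hfix g hg
    rw [← soclePairing_eq_zero_iff hN, map_sub, sub_eq_zero] at hmem
    rw [← hmem, soclePairing_lsub_lsub, hmem]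
  · rw [← soclePairing_eq_zero_iff hN, map_sub, sub_eq_zero]
    refine LinearMap.ext fun h => ?_
    rw [← lsub_lsub_inv g h, soclePairing_lsub_lsub, hinv g hg]

lemma finrank_truncatedInvariants_of_add_eq {m d e : ℕ} (he : e < Fintype.card F ^ m)
    (hde : d + e = n * (Fintype.card F ^ m - 1)) :
    Module.finrank F (truncatedInvariants (Fintype.card F ^ m) H d) =
      Module.finrank F (invariantFunctionals H e) := by
  have hN : 0 < Fintype.card F ^ m := pow_pos Fintype.card_pos m
  let pairing : fixDeg F n (Fintype.card F ^ m) H d →ₗ[F] invariantFunctionals H e :=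
    (soclePairing F n (Fintype.card F ^ m)).restrict fun f hf =>
      (mem_fixDeg_iff_soclePairing hde (mem_fixDeg.1 hf).1).1 hf
  refine finrank_map_mkQ_of_surjective (V := MvPolynomial (Fin n) F)
    (W := invariantFunctionals H e) (T := pairing) ?_ fun f => ?_
  · rintro ⟨φ, hφ⟩
    obtain ⟨f, hf, rfl⟩ := exists_isHomogeneous_soclePairing_eq he hde hφ.1
    exact ⟨⟨f, (mem_fixDeg_iff_soclePairing hde hf).2 hφ⟩, rfl⟩
  · rw [← soclePairing_eq_zero_iff hN]
    exact Subtype.ext_iff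

end SocleDuality

section Transfer

variable {n : ℕ} {F : Type} [Field F] (H : Subgroup (GL (Fin n) F)) [Finite H]

/-- The transfer `f ↦ ∑_{g ∈ H} g f` from polynomials to `H`-invariant polynomials. -/
noncomputable def transfer : MvPolynomial (Fin n) F →ₗ[F] MvPolynomial (Fin n) F :=
  letI := Fintype.ofFinite H
  ∑ g : H, (lsub g.1.1).toLinearMap

/-- A generator `d`, of degree `δ`, of the image of the transfer as an ideal of the invariant
ring, attained in its own degree. -/
structure IsTransferGenerator (δ : ℕ) (d : MvPolynomial (Fin n) F) : Prop where
  ne_zero : d ≠ 0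
  exists_transfer_eq : ∃ θ : MvPolynomial (Fin n) F, θ.IsHomogeneous δ ∧ transfer H θ = d
  dvd_transfer {e : ℕ} {f : MvPolynomial (Fin n) F} : f.IsHomogeneous e → d ∣ transfer H f

variable {H}

lemma transfer_apply [Fintype H] (f : MvPolynomial (Fin n) F) :
    transfer H f = ∑ g : H, lsub g.1.1 f := by
  rw [transfer, LinearMap.sum_apply, Subsingleton.elim (Fintype.ofFinite H) ‹_›]
  rfl

lemma isHomogeneous_transfer {d : ℕ} {f : MvPolynomial (Fin n) F} (hf : f.IsHomogeneous d) :
    (transfer H f).IsHomogeneous d := by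
  have := Fintype.ofFinite H
  rw [transfer_apply]
  exact MvPolynomial.IsHomogeneous.sum _ _ _ fun g _ => isHomogeneous_lsub hf _

lemma transfer_mem_invariantSubalgebra (f : MvPolynomial (Fin n) F) :
    transfer H f ∈ invariantSubalgebra H := by
  have := Fintype.ofFinite H
  refine mem_invariantSubalgebra.2 fun g hg => ?_
  simp only [transfer_apply, map_sum, lsub_lsub]
  exact Equiv.sum_comp (Equiv.mulRight (⟨g, hg⟩ : H)) fun h => lsub h.1.1 f

lemma transfer_lsub {g : GL (Fin n) F} (hg : g ∈ H) (f : MvPolynomial (Fin n) F) :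
    transfer H (lsub g.1 f) = transfer H f := by
  have := Fintype.ofFinite H
  simp only [transfer_apply, lsub_lsub]
  exact Equiv.sum_comp (Equiv.mulLeft (⟨g, hg⟩ : H)) fun h => lsub h.1.1 f

lemma transfer_mul {h : MvPolynomial (Fin n) F} (hh : h ∈ invariantSubalgebra H)
    (f : MvPolynomial (Fin n) F) : transfer H (f * h) = transfer H f * h := by
  have := Fintype.ofFinite H
  simp only [transfer_apply, map_mul, Finset.sum_mul]
  exact Finset.sum_congr rfl fun g _ => by rw [mem_invariantSubalgebra.1 hh g g.2]

lemma apply_transfer_mul {k : ℕ} {φ : Module.Dual F (MvPolynomial (Fin n) F)}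
    (hφ : φ ∈ invariantFunctionals H k) (f h : MvPolynomial (Fin n) F) :
    φ (transfer H f * h) = φ (f * transfer H h) := by
  have := Fintype.ofFinite H
  simp only [transfer_apply, Finset.sum_mul, Finset.mul_sum, map_sum]
  refine Fintype.sum_equiv (Equiv.inv H) _ _ fun g => ?_
  rw [← hφ.2 g g.2 (f * _), map_mul (lsub g.1.1), Equiv.inv_apply, InvMemClass.coe_inv,
    lsub_lsub_inv]

namespace IsTransferGenerator

variable {δ : ℕ} {d : MvPolynomial (Fin n) F}

lemma mem_invariantForms (hd : IsTransferGenerator H δ d) : d ∈ invariantForms H δ := by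
  obtain ⟨θ, hθ, rfl⟩ := hd.exists_transfer_eq
  exact ⟨isHomogeneous_transfer hθ, transfer_mem_invariantSubalgebra θ⟩

lemma invariantFunctionals_eq_annihilatingFunctionals (hd : IsTransferGenerator H δ d) {k : ℕ}
    (hk : k < 2 * δ) : invariantFunctionals H k = annihilatingFunctionals H d k := by
  refine le_antisymm (fun φ hφ => mem_annihilatingFunctionals.2 ⟨hφ, ?_⟩) inf_le_left
  obtain ⟨θ, _, hθd⟩ := hd.exists_transfer_eq
  suffices φ ∘ₗ LinearMap.mulLeft F d = 0 from LinearMap.congr_fun this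
  refine linearMap_ext_of_isHomogeneous fun e f hf => ?_
  change φ (d * f) = 0
  rcases eq_or_ne k (δ + e) with rfl | hke
  · rw [← hθd, apply_transfer_mul hφ, eq_zero_of_dvd_of_isHomogeneous hd.mem_invariantForms.1
      (isHomogeneous_transfer hf) (by omega) (hd.dvd_transfer hf), mul_zero, map_zero]
  · exact apply_eq_zero_of_mem_invariantFunctionals hφ (hd.mem_invariantForms.1.mul hf) hke

lemma mul_eq_zero_of_forall_invariantForms (hd : IsTransferGenerator H δ d)
    {θ : MvPolynomial (Fin n) F} (hθd : transfer H θ = d) {k : ℕ}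
    {φ : Module.Dual F (MvPolynomial (Fin n) F)} (hφ : φ ∈ invariantFunctionals H (2 * δ + k))
    (hzero : ∀ h ∈ invariantForms H k, φ (θ * d * h) = 0) (f : MvPolynomial (Fin n) F) :
    φ (d * f) = 0 := by
  suffices φ ∘ₗ LinearMap.mulLeft F d = 0 from LinearMap.congr_fun this f
  refine linearMap_ext_of_isHomogeneous fun e f hf => ?_
  change φ (d * f) = 0
  rcases eq_or_ne e (δ + k) with rfl | he
  · obtain ⟨h, hh, hdh⟩ := exists_mem_invariantForms_mul_eq hd.ne_zero hd.mem_invariantForms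
      ⟨isHomogeneous_transfer hf, transfer_mem_invariantSubalgebra f⟩ (hd.dvd_transfer hf)
    rw [← hθd, apply_transfer_mul hφ, ← hdh, ← mul_assoc, hzero h hh]
  · exact apply_eq_zero_of_mem_invariantFunctionals hφ (hd.mem_invariantForms.1.mul hf) (by omega)

lemma exists_mem_invariantFunctionals (hd : IsTransferGenerator H δ d)
    {θ : MvPolynomial (Fin n) F} (hθ : θ.IsHomogeneous δ) (hθd : transfer H θ = d) {k : ℕ}
    (l : Module.Dual F (invariantForms H k)) :
    ∃ φ ∈ invariantFunctionals H (2 * δ + k), ∀ h : invariantForms H k,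
      φ (θ * d * h) = l h := by
  obtain ⟨ψ, hψ⟩ := LinearMap.exists_leftInverse_of_injective
    (LinearMap.mulLeft F (d * d) ∘ₗ (invariantForms H k).subtype) <| LinearMap.ker_eq_bot.2 <|
      (mul_right_injective₀ (mul_ne_zero hd.ne_zero hd.ne_zero)).comp Subtype.val_injective
  refine ⟨l ∘ₗ ψ ∘ₗ transfer H ∘ₗ homogeneousComponent (2 * δ + k), ⟨fun f => ?_, fun g hg f => ?_⟩,
    fun h => ?_⟩
  · simp only [LinearMap.comp_apply, homogeneousComponent_of_isHomogeneous
      (homogeneousComponent_isHomogeneous _ f), if_true]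
  · simp only [LinearMap.comp_apply, homogeneousComponent_lsub, transfer_lsub hg]
  · have hhom : (θ * (d * h)).IsHomogeneous (2 * δ + k) := by
      rw [two_mul, add_assoc]
      exact hθ.mul (hd.mem_invariantForms.1.mul h.2.1)
    have hinv : d * h ∈ invariantSubalgebra H := mul_mem hd.mem_invariantForms.2 h.2.2
    simp only [LinearMap.comp_apply, mul_assoc, homogeneousComponent_eq_self hhom,
      transfer_mul hinv, hθd]
    rw [← mul_assoc]
    exact congrArg l (LinearMap.congr_fun hψ h)

/-- The Hilbert function of the dual module follows from that of the invariant ring: multiplication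
by `θ * d`, where `θ` has transfer `d`, detects the functionals modulo those annihilating `d`. -/
theorem finrank_invariantFunctionals (hd : IsTransferGenerator H δ d) (k : ℕ) :
    Module.finrank F (invariantFunctionals H (2 * δ + k)) =
      Module.finrank F (annihilatingFunctionals H d (2 * δ + k)) +
        Module.finrank F (invariantForms H k) := by
  obtain ⟨θ, hθ, hθd⟩ := hd.exists_transfer_eq
  let restrict : invariantFunctionals H (2 * δ + k) →ₗ[F] Module.Dual F (invariantForms H k) :=
    (LinearMap.mulLeft F (θ * d) ∘ₗ (invariantForms H k).subtype).dualMap ∘ₗ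
      (invariantFunctionals H (2 * δ + k)).subtype
  have hsurj : Function.Surjective restrict := fun l => by
    obtain ⟨φ, hφ, hl⟩ := hd.exists_mem_invariantFunctionals hθ hθd l
    exact ⟨⟨φ, hφ⟩, LinearMap.ext hl⟩
  have hker : (LinearMap.ker restrict).map (invariantFunctionals H (2 * δ + k)).subtype =
      annihilatingFunctionals H d (2 * δ + k) := by
    ext φ
    rw [mem_annihilatingFunctionals, Submodule.mem_map]
    constructor
    · rintro ⟨⟨φ, hφ⟩, hzero, rfl⟩
      exact ⟨hφ, hd.mul_eq_zero_of_forall_invariantForms hθd hφ fun h hh =>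
        LinearMap.congr_fun hzero ⟨h, hh⟩⟩
    · rintro ⟨hφ, hzero⟩
      refine ⟨⟨φ, hφ⟩, LinearMap.ext fun h => ?_, rfl⟩
      change φ (θ * d * h) = 0
      rw [mul_comm θ, mul_assoc, hzero]
  have hrank := LinearMap.finrank_range_add_finrank_ker (K := F)
    (V := invariantFunctionals H (2 * δ + k)) (V₂ := Module.Dual F (invariantForms H k)) restrict
  rw [LinearMap.range_eq_top.2 hsurj, finrank_top, Subspace.dual_finrank_eq] at hrank
  rw [← hrank, ← hker, Submodule.finrank_map_subtype_eq, add_comm]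

end IsTransferGenerator

end Transfer

section CoordinateVectors

variable {n d : ℕ}

lemma eq_single_degree {s : Fin n →₀ ℕ} {i : Fin n} (h : ∀ j ≠ i, s j = 0) :
    s = Finsupp.single i s.degree := by
  have hsi : s = Finsupp.single i (s i) := by
    ext j
    rcases eq_or_ne j i with rfl | hj
    · rw [Finsupp.single_eq_same]
    · rw [h j hj, Finsupp.single_eq_of_ne hj]
  have hdeg : s.degree = s i := (congrArg Finsupp.degree hsi).trans (Finsupp.degree_single _ _)
  rwa [hdeg]

variable {F : Type} [Field F]

lemma aeval_single_of_isHomogeneous {f : MvPolynomial (Fin n) F} (hf : f.IsHomogeneous d)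
    (i : Fin n) :
    aeval (Pi.single i (1 : F)) f = MvPolynomial.coeff (Finsupp.single i d) f := by
  rw [aeval_def, eval₂_eq', Finset.sum_eq_single (Finsupp.single i d)]
  · rw [Finset.prod_eq_single i (fun j _ hj => by simp [hj]) (by simp)]
    simp
  · intro s hs hne
    obtain ⟨j, hji, hj⟩ : ∃ j, j ≠ i ∧ s j ≠ 0 := by
      by_contra! h
      have hdeg : s.degree = d := by_contra fun hsd =>
        MvPolynomial.mem_support_iff.1 hs (hf.coeff_eq_zero hsd)
      exact hne (hdeg ▸ eq_single_degree h)
    rw [Finset.prod_eq_zero (Finset.mem_univ j) (by simp [hji, hj]), mul_zero]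
  · intro h
    rw [MvPolynomial.notMem_support_iff.1 h, map_zero, zero_mul]

lemma X_dvd_iff_aeval_single_eq_zero {i j : Fin 2} (hij : i ≠ j) {f : MvPolynomial (Fin 2) F}
    (hf : f.IsHomogeneous d) : X j ∣ f ↔ aeval (Pi.single i (1 : F)) f = 0 := by
  constructor
  · rintro ⟨h, rfl⟩
    rw [map_mul, aeval_X, Pi.single_eq_of_ne hij.symm, zero_mul]
  · intro h
    rw [aeval_single_of_isHomogeneous hf] at h
    rw [f.as_sum]
    refine Finset.dvd_sum fun s hs => X_dvd_monomial.2 (Or.inr fun hsj => ?_)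
    have hsi : s = Finsupp.single i s.degree :=
      eq_single_degree fun k hk => (show k = j by omega) ▸ hsj
    have hdeg : s.degree = d := by_contra fun hsd =>
      MvPolynomial.mem_support_iff.1 hs (hf.coeff_eq_zero hsd)
    exact MvPolynomial.mem_support_iff.1 hs (by rw [hsi, hdeg, h])

end CoordinateVectors

section DicksonInvariant

lemma prod_X_sub_C_eq (F : Type*) [Field F] [Fintype F] :
    ∏ a : F, (Polynomial.X - Polynomial.C a) =
      (Polynomial.X ^ Fintype.card F - Polynomial.X : Polynomial F) := by
  have hroots := FiniteField.roots_X_pow_card_sub_X F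
  have hmonic : (Polynomial.X ^ Fintype.card F - Polynomial.X : Polynomial F).Monic :=
    Polynomial.monic_X_pow_sub (by
      rw [Polynomial.degree_X]; exact_mod_cast Fintype.one_lt_card (α := F))
  have h := Polynomial.prod_multiset_X_sub_C_of_monic_of_roots_card_eq hmonic (by
    rw [hroots, FiniteField.X_pow_card_sub_X_natDegree_eq F Fintype.one_lt_card]; rfl)
  rwa [hroots] at h

lemma isHomogeneous_esymm (σ R : Type*) [Fintype σ] [CommSemiring R] (k : ℕ) :
    (esymm σ R k).IsHomogeneous k :=
  MvPolynomial.IsHomogeneous.sum _ _ _ fun t ht => by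
    simpa only [Finset.sum_const, smul_eq_mul, mul_one, (Finset.mem_powersetCard.1 ht).2] using
      MvPolynomial.IsHomogeneous.prod t (fun i => (X i : MvPolynomial σ R)) (fun _ => 1)
        fun i _ => isHomogeneous_X R i

variable {n : ℕ} {F : Type} [Field F]

/-- The linear form with coefficient vector `w`. -/
noncomputable def linearForm (w : Fin n → F) : MvPolynomial (Fin n) F := ∑ i, w i • X i

lemma lsub_linearForm (g : Matrix (Fin n) (Fin n) F) (w : Fin n → F) :
    lsub g (linearForm w) = linearForm (w ᵥ* g) := by
  simp only [linearForm, map_sum, map_smul, lsub_X, Finset.smul_sum, smul_smul, vecMul, dotProduct,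
    Finset.sum_smul]
  exact Finset.sum_comm

lemma isHomogeneous_linearForm (w : Fin n → F) : (linearForm w).IsHomogeneous 1 :=
  MvPolynomial.IsHomogeneous.sum _ _ _ fun i _ => by
    rw [MvPolynomial.smul_eq_C_mul]
    exact isHomogeneous_C_mul_X _ _

variable [Fintype F]

/-- Dickson's invariant of degree `k`: the `k`-th elementary symmetric function of all linear
forms. -/
noncomputable def dicksonInvariant (n : ℕ) (F : Type) [Field F] [Fintype F] (k : ℕ) :
    MvPolynomial (Fin n) F :=
  aeval linearForm (esymm (Fin n → F) F k)

lemma dicksonInvariant_mem_invariantForms (H : Subgroup (GL (Fin n) F)) (k : ℕ) :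
    dicksonInvariant n F k ∈ invariantForms H k := by
  classical
  refine mem_invariantForms.2 ⟨?_, mem_invariantSubalgebra.2 fun g _ => ?_⟩
  · have h := (isHomogeneous_esymm (Fin n → F) F k).aeval linearForm isHomogeneous_linearForm
    rwa [one_mul] at h
  · let e : (Fin n → F) ≃ (Fin n → F) :=
      { toFun := fun w => w ᵥ* g.1
        invFun := fun w => w ᵥ* g⁻¹.1
        left_inv := fun w => by simp only [vecMul_vecMul, Units.mul_inv, vecMul_one]
        right_inv := fun w => by simp only [vecMul_vecMul, Units.inv_mul, vecMul_one] }
    have hcomp : (lsub g.1).comp (aeval linearForm) =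
        (MvPolynomial.aeval (linearForm (F := F))).comp (rename e) := by
      ext1 w
      simp only [AlgHom.comp_apply, aeval_X, rename_X, lsub_linearForm]
      rfl
    have := DFunLike.congr_fun hcomp (esymm (Fin n → F) F k)
    rwa [AlgHom.comp_apply, AlgHom.comp_apply, rename_esymm] at this

/-- At `(1, 0)` the linear forms take each value `q` times, so their elementary symmetric functions
become the coefficients of `∏ (T + a) ^ q = T ^ q ^ 2 - T ^ q`. -/
lemma aeval_single_dicksonInvariant :
    aeval (Pi.single 0 (1 : F))
      (dicksonInvariant 2 F (Fintype.card F * (Fintype.card F - 1))) = -1 := by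
  set q := Fintype.card F with hq
  have hcard : Fintype.card (Fin 2 → F) = q ^ 2 := by simp [hq]
  have hlin (w : Fin 2 → F) : aeval (Pi.single 0 (1 : F)) (linearForm w) = w 0 := by
    simp [linearForm]
  have hprod : ∏ w : Fin 2 → F, (Polynomial.X + Polynomial.C (w 0)) =
      (Polynomial.X ^ q ^ 2 - Polynomial.X ^ q : Polynomial F) := by
    rw [← (finTwoArrowEquiv F).symm.prod_comp, Fintype.prod_prod_type]
    simp only [finTwoArrowEquiv_symm_apply, Matrix.cons_val_zero, Finset.prod_const,
      Finset.card_univ, Finset.prod_pow, ← hq]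
    have hneg := Equiv.prod_comp (Equiv.neg F) fun a =>
      (Polynomial.X + Polynomial.C a : Polynomial F)
    simp only [Equiv.neg_apply, map_neg, ← sub_eq_add_neg, prod_X_sub_C_eq] at hneg
    rw [← hneg, ← hq]
    have hfrob := map_sub (FiniteField.frobeniusAlgHom F (Polynomial F)) (Polynomial.X ^ q)
      Polynomial.X
    simpa only [FiniteField.coe_frobeniusAlgHom, ← hq, ← pow_mul, ← sq] using hfrob
  have hle : q ≤ q ^ 2 := Nat.le_self_pow two_ne_zero q
  have hsub : q * (q - 1) = #(Finset.univ : Finset (Fin 2 → F)) - q := by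
    rw [Finset.card_univ, hcard, Nat.mul_sub_one, sq]
  have hcoeff := Finset.prod_X_add_C_coeff (Finset.univ : Finset (Fin 2 → F)) (fun w => w 0)
    (k := q) (by rwa [Finset.card_univ, hcard])
  have hlt : q ≠ q ^ 2 := (lt_self_pow₀ Fintype.one_lt_card one_lt_two).ne
  rw [hprod, Polynomial.coeff_sub, Polynomial.coeff_X_pow, Polynomial.coeff_X_pow, if_neg hlt,
    if_pos rfl, zero_sub] at hcoeff
  simp only [dicksonInvariant, esymm, map_sum, map_prod, aeval_X, hlin]
  rw [hsub, hcoeff]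

end DicksonInvariant

section Borel

/-- The subgroup of upper triangular matrices in `GL₂(F)`. -/
def borelSubgroup (F : Type) [Field F] : Subgroup (GL (Fin 2) F) where
  carrier := {g | g.1 1 0 = 0}
  mul_mem' {g h} hg hh := by
    simp only [Set.mem_ofPred_eq] at hg hh
    simp [Matrix.mul_apply, hg, hh]
  one_mem' := by simp
  inv_mem' {g} hg := by
    simp only [Set.mem_ofPred_eq] at hg
    simp [Matrix.inv_def, Matrix.adjugate_fin_two, hg]

/-- The subgroup of upper unitriangular matrices in `GL₂(F)`. -/
def unipotentSubgroup (F : Type) [Field F] : Subgroup (GL (Fin 2) F) :=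
  (GeneralLinearGroup.upperRightHom (R := F)).toMonoidHom.range

variable {F : Type} [Field F]

lemma mem_borelSubgroup {g : GL (Fin 2) F} : g ∈ borelSubgroup F ↔ g.1 1 0 = 0 := Iff.rfl

lemma scalar_mem_borelSubgroup (c : Fˣ) :
    GeneralLinearGroup.scalar (Fin 2) c ∈ borelSubgroup F := by
  simp [mem_borelSubgroup]

lemma mem_unipotentSubgroup {g : GL (Fin 2) F} :
    g ∈ unipotentSubgroup F ↔ ∃ c : F, GeneralLinearGroup.upperRightHom c = g :=
  Iff.rfl

lemma unipotentSubgroup_le_borelSubgroup : unipotentSubgroup F ≤ borelSubgroup F := by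
  rintro _ ⟨c, rfl⟩
  rfl

lemma invariantSubalgebra_anti {n : ℕ} {H K : Subgroup (GL (Fin n) F)} (h : H ≤ K) :
    invariantSubalgebra K ≤ invariantSubalgebra H := fun _ hf =>
  mem_invariantSubalgebra.2 fun g hg => mem_invariantSubalgebra.1 hf g (h hg)

lemma lsub_upperRightHom_X_zero (c : F) :
    lsub (GeneralLinearGroup.upperRightHom c).1 (MvPolynomial.X 0) =
      MvPolynomial.X 0 + c • MvPolynomial.X 1 := by
  simp [lsub_X]

lemma lsub_upperRightHom_X_one (c : F) :
    lsub (GeneralLinearGroup.upperRightHom c).1 (MvPolynomial.X 1) = MvPolynomial.X 1 := by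
  simp [lsub_X]

lemma X_one_mem_invariantSubalgebra :
    MvPolynomial.X 1 ∈ invariantSubalgebra (unipotentSubgroup F) :=
  mem_invariantSubalgebra.2 <| by
    intro g hg
    obtain ⟨c, rfl⟩ := mem_unipotentSubgroup.1 hg
    exact lsub_upperRightHom_X_one c

lemma isRelPrime_X_zero_add_smul_X_one (c : F) :
    IsRelPrime (MvPolynomial.X 0 + c • MvPolynomial.X 1 : MvPolynomial (Fin 2) F)
      (MvPolynomial.X 1) := by
  intro h hsum h1
  have h0 : h ∣ MvPolynomial.X 0 := (dvd_add_left (dvd_smul_of_dvd c h1)).1 hsum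
  have hX : IsRelPrime (MvPolynomial.X 0 : MvPolynomial (Fin 2) F) (MvPolynomial.X 1) :=
    X_prime.irreducible.isRelPrime_iff_not_dvd.2 (by simp)
  exact hX h0 h1

lemma isRelPrime_X_zero_add_smul_add_smul {a b : F} (hab : a ≠ b) :
    IsRelPrime (MvPolynomial.X 0 + a • MvPolynomial.X 1 : MvPolynomial (Fin 2) F)
      (MvPolynomial.X 0 + b • MvPolynomial.X 1) := by
  intro h ha hb
  refine isRelPrime_X_zero_add_smul_X_one a ha ?_
  have hsub := dvd_sub ha hb
  rw [add_sub_add_left_eq_sub, ← sub_smul] at hsub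
  simpa only [inv_smul_smul₀ (sub_ne_zero.2 hab)] using dvd_smul_of_dvd (a - b)⁻¹ hsub

variable [Fintype F]

/-- The product of the orbit of `x` under the unipotent group. -/
noncomputable def orbitProduct (F : Type) [Field F] [Fintype F] : MvPolynomial (Fin 2) F :=
  ∏ c : F, (MvPolynomial.X 0 + c • MvPolynomial.X 1)

lemma orbitProduct_mem_invariantForms :
    orbitProduct F ∈ invariantForms (unipotentSubgroup F) (Fintype.card F) := by
  refine mem_invariantForms.2 ⟨?_, mem_invariantSubalgebra.2 ?_⟩
  · have h := MvPolynomial.IsHomogeneous.prod Finset.univ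
      (fun c : F => (MvPolynomial.X 0 + c • MvPolynomial.X 1 : MvPolynomial (Fin 2) F))
      (fun _ => 1) fun c _ => by
        rw [MvPolynomial.smul_eq_C_mul]
        exact (isHomogeneous_X F 0).add (isHomogeneous_C_mul_X c 1)
    rwa [Finset.sum_const, Finset.card_univ, smul_eq_mul, mul_one] at h
  · intro g hg
    obtain ⟨c, rfl⟩ := mem_unipotentSubgroup.1 hg
    simp only [orbitProduct, map_prod, map_add, map_smul, lsub_upperRightHom_X_zero,
      lsub_upperRightHom_X_one, add_assoc, ← add_smul]
    exact Equiv.prod_comp (Equiv.addLeft c) fun a =>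
      (MvPolynomial.X 0 + a • MvPolynomial.X 1 : MvPolynomial (Fin 2) F)

lemma orbitProduct_eq :
    orbitProduct F =
      MvPolynomial.X 0 ^ Fintype.card F -
        MvPolynomial.X 0 * MvPolynomial.X 1 ^ (Fintype.card F - 1) := by
  have hpos : 1 + (Fintype.card F - 1) = Fintype.card F := by
    have := Fintype.card_pos (α := F); omega
  have hmul := (isHomogeneous_X F (0 : Fin 2)).mul (isHomogeneous_X_pow 1 (Fintype.card F - 1))
  rw [hpos] at hmul
  have hhom := (isHomogeneous_X_pow (R := F) (0 : Fin 2) (Fintype.card F)).sub hmul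
  rw [← Polynomial.homogenize_eq_of_isHomogeneous hhom rfl,
    ← Polynomial.homogenize_eq_of_isHomogeneous orbitProduct_mem_invariantForms.1 rfl]
  have hneg := Equiv.prod_comp (Equiv.neg F) fun a => (Polynomial.X - Polynomial.C a : Polynomial F)
  congr 1
  simpa [orbitProduct, Polynomial.smul_eq_C_mul, prod_X_sub_C_eq] using hneg

lemma orbitProduct_pow_dvd {f : MvPolynomial (Fin 2) F}
    (hf : f ∈ invariantSubalgebra (unipotentSubgroup F)) {k : ℕ} (hk : MvPolynomial.X 0 ^ k ∣ f) :
    orbitProduct F ^ k ∣ f := by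
  rw [orbitProduct, ← Finset.prod_pow]
  refine Finset.prod_dvd_of_isRelPrime (fun a _ b _ hab => ?_) fun c _ => ?_
  · exact (isRelPrime_X_zero_add_smul_add_smul hab).pow
  · rw [← lsub_upperRightHom_X_zero, ← map_pow, ← mem_invariantSubalgebra.1 hf _ ⟨c, rfl⟩]
    exact map_dvd _ hk

lemma isRelPrime_orbitProduct_X_one : IsRelPrime (orbitProduct F) (MvPolynomial.X 1) :=
  IsRelPrime.prod_left fun c _ => isRelPrime_X_zero_add_smul_X_one c

lemma card_dvd_of_aeval_single_ne_zero {d : ℕ} {f : MvPolynomial (Fin 2) F}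
    (hf : f ∈ invariantForms (unipotentSubgroup F) d) (hne : aeval (Pi.single 0 (1 : F)) f ≠ 0) :
    Fintype.card F ∣ d := by
  induction d using Nat.strong_induction_on generalizing f with
  | _ d ih =>
  rcases eq_or_ne d 0 with rfl | hd
  · exact dvd_zero _
  set g := f - aeval (Pi.single 1 (1 : F)) f • MvPolynomial.X 1 ^ d with hg
  have hginv : g ∈ invariantForms (unipotentSubgroup F) d :=
    sub_mem hf (Submodule.smul_mem _ _
      ⟨isHomogeneous_X_pow 1 d, pow_mem X_one_mem_invariantSubalgebra d⟩)
  have hg0 : aeval (Pi.single 0 (1 : F)) g = aeval (Pi.single 0 (1 : F)) f := by simp [hg, hd]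
  have hdvd : orbitProduct F ∣ g := by
    have hX : MvPolynomial.X 0 ∣ g :=
      (X_dvd_iff_aeval_single_eq_zero one_ne_zero hginv.1).2 (by simp [hg])
    simpa only [pow_one] using orbitProduct_pow_dvd (k := 1) hginv.2 (by rwa [pow_one])
  rcases lt_or_ge d (Fintype.card F) with hlt | hle
  · rw [← hg0, eq_zero_of_dvd_of_isHomogeneous orbitProduct_mem_invariantForms.1 hginv.1 hlt hdvd,
      map_zero] at hne
    exact absurd rfl hne
  · obtain ⟨e, rfl⟩ := Nat.exists_eq_add_of_le hle
    have hD0 : orbitProduct F ≠ 0 := by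
      intro h
      rw [h, zero_dvd_iff] at hdvd
      rw [← hg0, hdvd, map_zero] at hne
      exact hne rfl
    obtain ⟨h, hh, hDh⟩ := exists_mem_invariantForms_mul_eq hD0 orbitProduct_mem_invariantForms
      hginv hdvd
    refine (Nat.dvd_add_right dvd_rfl).2 (ih e ?_ hh fun h0 => hne ?_)
    · have := Fintype.card_pos (α := F); omega
    · rw [← hg0, ← hDh, map_mul, h0, mul_zero]

end Borel

section ContainsBorel

variable {F : Type} [Field F] {H : Subgroup (GL (Fin 2) F)}

lemma lsub_diagonal_of_mem_invariantSubalgebra (hH : borelSubgroup F ≤ H)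
    {f : MvPolynomial (Fin 2) F} (hf : f ∈ invariantSubalgebra H) (c : Fin 2 → Fˣ) :
    lsub (Matrix.diagonal fun i => (c i : F)) f = f :=
  mem_invariantSubalgebra.1 hf (GeneralLinearGroup.mkOfDetNeZero
    (Matrix.diagonal fun i => (c i : F)) (by simp)) (hH rfl)

variable [Fintype F]

lemma card_sub_one_dvd_of_coeff_ne_zero (hH : borelSubgroup F ≤ H)
    {f : MvPolynomial (Fin 2) F} (hf : f ∈ invariantSubalgebra H) {s : Fin 2 →₀ ℕ}
    (hs : MvPolynomial.coeff s f ≠ 0) (i : Fin 2) : Fintype.card F - 1 ∣ s i := by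
  refine (FiniteField.forall_pow_eq_one_iff F _).1 fun c => Units.ext ?_
  have h := coeff_lsub_diagonal (fun j => (Function.update (1 : Fin 2 → Fˣ) i c j : F)) s f
  rw [lsub_diagonal_of_mem_invariantSubalgebra hH hf, eq_comm, mul_eq_right₀ hs,
    Finset.prod_eq_single i (fun j _ hj => by simp [hj]) (by simp)] at h
  simpa using h

lemma X_pow_card_sub_one_dvd (hH : borelSubgroup F ≤ H) {f : MvPolynomial (Fin 2) F}
    (hf : f ∈ invariantSubalgebra H) {i : Fin 2} (hi : MvPolynomial.X i ∣ f) :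
    MvPolynomial.X i ^ (Fintype.card F - 1) ∣ f := by
  rw [f.as_sum]
  refine Finset.dvd_sum fun s hs => ?_
  rw [MvPolynomial.X_pow_eq_monomial, MvPolynomial.monomial_dvd_monomial]
  have hs0 := MvPolynomial.mem_support_iff.1 hs
  refine ⟨Or.inr (Finsupp.single_le_iff.2 (Nat.le_of_dvd (Nat.pos_of_ne_zero fun h => hs0 ?_)
    (card_sub_one_dvd_of_coeff_ne_zero hH hf hs0 i))), one_dvd _⟩
  obtain ⟨g, rfl⟩ := hi
  rw [MvPolynomial.coeff_X_mul', if_neg (by simpa using h)]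

lemma card_mul_card_sub_one_dvd_of_aeval_single_ne_zero (hH : borelSubgroup F ≤ H) {d : ℕ}
    {f : MvPolynomial (Fin 2) F} (hf : f ∈ invariantForms H d)
    (hne : aeval (Pi.single 0 (1 : F)) f ≠ 0) :
    Fintype.card F * (Fintype.card F - 1) ∣ d := by
  have hcoprime : Nat.Coprime (Fintype.card F) (Fintype.card F - 1) :=
    (Nat.coprime_self_sub_right Fintype.card_pos).2 (Nat.coprime_one_right _)
  refine hcoprime.mul_dvd_of_dvd_of_dvd (card_dvd_of_aeval_single_ne_zero
    ⟨hf.1, invariantSubalgebra_anti (unipotentSubgroup_le_borelSubgroup.trans hH) hf.2⟩ hne) ?_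
  rw [aeval_single_of_isHomogeneous hf.1] at hne
  simpa using card_sub_one_dvd_of_coeff_ne_zero hH hf.2 hne 0

end ContainsBorel

section BoundaryGenerator

variable {F : Type} [Field F]

/-- A generator `d`, of degree `δ`, of the ideal of invariants that vanish on the line `y = 0`. -/
structure IsBoundaryGenerator (H : Subgroup (GL (Fin 2) F)) (δ : ℕ) (d : MvPolynomial (Fin 2) F) :
    Prop where
  ne_zero : d ≠ 0
  mem_invariantForms : d ∈ invariantForms H δ
  X_one_dvd : MvPolynomial.X 1 ∣ d
  dvd_of_X_one_dvd {e : ℕ} {f : MvPolynomial (Fin 2) F} :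
    f ∈ invariantForms H e → MvPolynomial.X 1 ∣ f → d ∣ f

variable {H : Subgroup (GL (Fin 2) F)}

namespace IsBoundaryGenerator

variable {δ : ℕ} {d : MvPolynomial (Fin 2) F}

lemma finrank_inf_ker_add (hd : IsBoundaryGenerator H δ d) (k : ℕ) :
    Module.finrank F ↥(invariantForms H (δ + k) ⊓
        LinearMap.ker (MvPolynomial.aeval (Pi.single 0 (1 : F))).toLinearMap) =
      Module.finrank F (invariantForms H k) := by
  have hmap : invariantForms H (δ + k) ⊓
      LinearMap.ker (MvPolynomial.aeval (Pi.single 0 (1 : F))).toLinearMap =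
        (invariantForms H k).map (LinearMap.mulLeft F d) := by
    ext f
    rw [Submodule.mem_inf, LinearMap.mem_ker, AlgHom.toLinearMap_apply, Submodule.mem_map]
    constructor
    · rintro ⟨hf, h0⟩
      exact exists_mem_invariantForms_mul_eq hd.ne_zero hd.mem_invariantForms hf
        (hd.dvd_of_X_one_dvd hf ((X_dvd_iff_aeval_single_eq_zero zero_ne_one hf.1).2 h0))
    · rintro ⟨h, hh, rfl⟩
      have hmem : d * h ∈ invariantForms H (δ + k) :=
        ⟨hd.mem_invariantForms.1.mul hh.1,
          (invariantSubalgebra H).mul_mem hd.mem_invariantForms.2 hh.2⟩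
      exact ⟨hmem, (X_dvd_iff_aeval_single_eq_zero zero_ne_one hmem.1).1
        (hd.X_one_dvd.mul_right h)⟩
  rw [hmap, ← LinearEquiv.finrank_eq (Submodule.equivMapOfInjective (LinearMap.mulLeft F d)
    (mul_right_injective₀ hd.ne_zero) (invariantForms H k))]

lemma finrank_inf_ker_of_lt (hd : IsBoundaryGenerator H δ d) {k : ℕ} (hk : k < δ) :
    Module.finrank F ↥(invariantForms H k ⊓
      LinearMap.ker (MvPolynomial.aeval (Pi.single 0 (1 : F))).toLinearMap) = 0 := by
  refine Submodule.finrank_eq_zero.2 ((Submodule.eq_bot_iff _).2 fun f ⟨hf, h0⟩ => ?_)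
  exact eq_zero_of_dvd_of_isHomogeneous hd.mem_invariantForms.1 hf.1 hk
    (hd.dvd_of_X_one_dvd hf ((X_dvd_iff_aeval_single_eq_zero zero_ne_one hf.1).2 h0))

end IsBoundaryGenerator

variable [Fintype F]

lemma finrank_invariantForms_eq_ite_add (hH : borelSubgroup F ≤ H) (k : ℕ) :
    Module.finrank F (invariantForms H k) =
      (if Fintype.card F * (Fintype.card F - 1) ∣ k then 1 else 0) +
        Module.finrank F ↥(invariantForms H k ⊓
          LinearMap.ker (MvPolynomial.aeval (Pi.single 0 (1 : F))).toLinearMap) := by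
  let evalAt : invariantForms H k →ₗ[F] F :=
    (MvPolynomial.aeval (Pi.single 0 (1 : F))).toLinearMap ∘ₗ (invariantForms H k).subtype
  have hker : (LinearMap.ker evalAt).map (invariantForms H k).subtype = invariantForms H k ⊓
      LinearMap.ker (MvPolynomial.aeval (Pi.single 0 (1 : F))).toLinearMap := by
    rw [LinearMap.ker_comp, Submodule.map_comap_subtype]
  have hrange : Module.finrank F (LinearMap.range evalAt) =
      if Fintype.card F * (Fintype.card F - 1) ∣ k then 1 else 0 := by
    split_ifs with hk
    · obtain ⟨j, rfl⟩ := hk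
      refine le_antisymm ((Submodule.finrank_le _).trans_eq (Module.finrank_self F))
        (Submodule.one_le_finrank_iff.2 (Submodule.ne_bot_iff _ |>.2 ?_))
      have hmem := dicksonInvariant_mem_invariantForms H (Fintype.card F * (Fintype.card F - 1))
      refine ⟨_, ⟨⟨dicksonInvariant 2 F _ ^ j, hmem.1.pow j,
        (invariantSubalgebra H).pow_mem hmem.2 j⟩, rfl⟩, ?_⟩
      change MvPolynomial.aeval _ (dicksonInvariant 2 F _ ^ j) ≠ 0
      rw [map_pow, aeval_single_dicksonInvariant]
      exact pow_ne_zero j (neg_ne_zero.2 one_ne_zero)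
    · refine Submodule.finrank_eq_zero.2 (LinearMap.range_eq_bot.2 (LinearMap.ext fun f => ?_))
      by_contra hne
      exact hk (card_mul_card_sub_one_dvd_of_aeval_single_ne_zero hH f.2 hne)
  rw [← LinearMap.finrank_range_add_finrank_ker (K := F) (V := invariantForms H k) (V₂ := F) evalAt,
    hrange, ← hker, Submodule.finrank_map_subtype_eq]

theorem IsBoundaryGenerator.finrank_invariantForms (hH : borelSubgroup F ≤ H) {δ : ℕ}
    {d : MvPolynomial (Fin 2) F} (hd : IsBoundaryGenerator H δ d) (k : ℕ) :
    Module.finrank F (invariantForms H k) =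
      (if Fintype.card F * (Fintype.card F - 1) ∣ k then 1 else 0) +
        if δ ≤ k then Module.finrank F (invariantForms H (k - δ)) else 0 := by
  rw [finrank_invariantForms_eq_ite_add hH]
  split_ifs with _ hk hk
  all_goals first
    | rw [hd.finrank_inf_ker_of_lt (not_le.1 hk)]
    | obtain ⟨j, rfl⟩ := Nat.exists_eq_add_of_le hk
      rw [hd.finrank_inf_ker_add, Nat.add_sub_cancel_left]

theorem isBoundaryGenerator_borelSubgroup :
    IsBoundaryGenerator (borelSubgroup F) (Fintype.card F - 1)
      (MvPolynomial.X 1 ^ (Fintype.card F - 1)) where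
  ne_zero := pow_ne_zero _ (X_ne_zero _)
  mem_invariantForms := by
    refine ⟨isHomogeneous_X_pow _ _, mem_invariantSubalgebra.2 fun g hg => ?_⟩
    have hdet : g.1 0 0 * g.1 1 1 ≠ 0 := by
      have h := (GeneralLinearGroup.det_ne_zero g)
      rwa [det_fin_two, mem_borelSubgroup.1 hg, mul_zero, sub_zero] at h
    rw [map_pow, lsub_X, Fin.sum_univ_two, mem_borelSubgroup.1 hg, zero_smul, zero_add, smul_pow,
      FiniteField.pow_card_sub_one_eq_one _ (right_ne_zero_of_mul hdet), one_smul]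
  X_one_dvd := dvd_pow_self _ (Nat.sub_pos_of_lt Fintype.one_lt_card).ne'
  dvd_of_X_one_dvd hf h1 := X_pow_card_sub_one_dvd le_rfl hf.2 h1

/-- The product `y ∏ (x + c y)` of representatives of all the linear forms up to scalars. -/
noncomputable def lineProduct (F : Type) [Field F] [Fintype F] : MvPolynomial (Fin 2) F :=
  MvPolynomial.X 1 * orbitProduct F

lemma lineProduct_eq : lineProduct F = MvPolynomial.X 0 ^ Fintype.card F * MvPolynomial.X 1 -
    MvPolynomial.X 0 * MvPolynomial.X 1 ^ Fintype.card F := by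
  have hpow := pow_sub_one_mul (Fintype.card_ne_zero (α := F))
    (MvPolynomial.X 1 : MvPolynomial (Fin 2) F)
  rw [lineProduct, orbitProduct_eq, ← hpow]
  ring

lemma isHomogeneous_lineProduct : (lineProduct F).IsHomogeneous (Fintype.card F + 1) := by
  rw [add_comm]
  exact (isHomogeneous_X F 1).mul orbitProduct_mem_invariantForms.1

lemma lsub_X_pow_card (g : Matrix (Fin 2) (Fin 2) F) (i : Fin 2) :
    lsub g (MvPolynomial.X i) ^ Fintype.card F =
      g i 0 • MvPolynomial.X 0 ^ Fintype.card F + g i 1 • MvPolynomial.X 1 ^ Fintype.card F := by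
  have hfrob := map_add (FiniteField.frobeniusAlgHom F (MvPolynomial (Fin 2) F))
    (g i 0 • MvPolynomial.X 0) (g i 1 • MvPolynomial.X 1)
  rw [map_smul, map_smul] at hfrob
  rwa [lsub_X, Fin.sum_univ_two]

lemma lsub_lineProduct (g : Matrix (Fin 2) (Fin 2) F) :
    lsub g (lineProduct F) = g.det • lineProduct F := by
  simp only [lineProduct_eq, map_sub, map_mul, map_pow, lsub_X_pow_card]
  simp only [lsub_X, Fin.sum_univ_two, det_fin_two, MvPolynomial.smul_eq_C_mul, map_sub, map_mul]
  ring

theorem isBoundaryGenerator_top :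
    IsBoundaryGenerator (⊤ : Subgroup (GL (Fin 2) F))
      ((Fintype.card F + 1) * (Fintype.card F - 1)) (lineProduct F ^ (Fintype.card F - 1)) where
  ne_zero := pow_ne_zero _ (mul_ne_zero (X_ne_zero _) (Finset.prod_ne_zero_iff.2 fun c _ h => by
    simpa using congrArg (MvPolynomial.aeval (Pi.single 0 (1 : F))) h))
  mem_invariantForms := by
    refine ⟨isHomogeneous_lineProduct.pow _, mem_invariantSubalgebra.2 fun g _ => ?_⟩
    rw [map_pow, lsub_lineProduct, smul_pow,
      FiniteField.pow_card_sub_one_eq_one _ (GeneralLinearGroup.det_ne_zero g), one_smul]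
  X_one_dvd := (dvd_mul_right _ _).pow (Nat.sub_pos_of_lt Fintype.one_lt_card).ne'
  dvd_of_X_one_dvd {e f} hf h1 := by
    have h0 : MvPolynomial.X 0 ∣ f := by
      have hswap := mem_invariantSubalgebra.1 hf.2
        (GeneralLinearGroup.mkOfDetNeZero !![0, 1; 1, 0] (by simp [det_fin_two])) trivial
      rw [← hswap, show MvPolynomial.X 0 = lsub !![0, 1; 1, 0] (MvPolynomial.X (R := F) 1) by
        simp [lsub_X]]
      exact map_dvd _ h1
    rw [lineProduct, mul_pow]
    exact isRelPrime_orbitProduct_X_one.symm.pow.mul_dvd (X_pow_card_sub_one_dvd le_top hf.2 h1)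
      (orbitProduct_pow_dvd (invariantSubalgebra_anti le_top hf.2)
        (X_pow_card_sub_one_dvd le_top hf.2 h0))

end BoundaryGenerator

section TransferDivisibility

lemma sum_eq_zero_of_forall_mul_right {G R : Type*} [Group G] [Fintype G] [NonAssocSemiring R]
    (K : Subgroup G) (hK : (Nat.card K : R) = 0) {ψ : G → R}
    (hψ : ∀ g, ∀ k ∈ K, ψ (g * k) = ψ g) : ∑ g, ψ g = 0 := by
  classical
  obtain ⟨S, hS, -⟩ := K.exists_isComplement_left 1
  have := Fintype.ofFinite S
  have := Fintype.ofFinite K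
  have hbij : Function.Bijective fun x : S × K => (x.1 : G) * x.2 := hS
  have hconst (s : S) (k : K) : ψ (s * k) = ψ s := hψ s k k.2
  rw [← hbij.sum_comp, Fintype.sum_prod_type]
  simp only [hconst, Finset.sum_const, nsmul_eq_mul]
  simp only [Finset.card_univ, ← Nat.card_eq_fintype_card, hK, zero_mul, Finset.sum_const_zero]

variable {F : Type} [Field F]

lemma card_unipotentSubgroup : Nat.card (unipotentSubgroup F) = Nat.card F := by
  have hrange : (unipotentSubgroup F : Set (GL (Fin 2) F)) =
      Set.range fun c : F => GeneralLinearGroup.upperRightHom c :=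
    Set.ext fun _ => mem_unipotentSubgroup
  rw [← Nat.card_range_of_injective (GeneralLinearGroup.injective_upperRightHom (R := F))]
  exact congrArg (fun s : Set (GL (Fin 2) F) => Nat.card s) hrange

variable [Finite F] {H : Subgroup (GL (Fin 2) F)}

/-- The value of `g f` at `(1, 0)` only depends on the coset of `g` modulo the unipotent group,
whose order is divisible by the characteristic. -/
lemma X_one_dvd_transfer (hH : unipotentSubgroup F ≤ H) {d : ℕ} {f : MvPolynomial (Fin 2) F}
    (hf : f.IsHomogeneous d) : MvPolynomial.X 1 ∣ transfer H f := by
  have := Fintype.ofFinite F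
  have := Fintype.ofFinite H
  rw [X_dvd_iff_aeval_single_eq_zero zero_ne_one (isHomogeneous_transfer hf), transfer_apply,
    map_sum]
  refine sum_eq_zero_of_forall_mul_right ((unipotentSubgroup F).subgroupOf H) ?_ ?_
  · rw [Nat.card_congr (Subgroup.subgroupOfEquivOfLe hH).toEquiv, card_unipotentSubgroup,
      Nat.card_eq_fintype_card, FiniteField.cast_card_eq_zero]
  · rintro g k hk
    obtain ⟨c, hc⟩ := mem_unipotentSubgroup.1 (Subgroup.mem_subgroupOf.1 hk)
    rw [aeval_lsub, aeval_lsub, Subgroup.coe_mul, Units.val_mul, ← hc, Matrix.map_mul,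
      ← Matrix.mulVec_mulVec]
    congr 2
    ext i
    fin_cases i <;> simp

lemma IsBoundaryGenerator.isTransferGenerator (hH : unipotentSubgroup F ≤ H) {δ : ℕ}
    {d θ : MvPolynomial (Fin 2) F} (hd : IsBoundaryGenerator H δ d) (hθ : θ.IsHomogeneous δ)
    (hne : transfer H θ ≠ 0) : IsTransferGenerator H δ d where
  ne_zero := hd.ne_zero
  exists_transfer_eq := by
    have hmem : transfer H θ ∈ invariantForms H (δ + 0) :=
      ⟨isHomogeneous_transfer hθ, transfer_mem_invariantSubalgebra θ⟩
    obtain ⟨h, hh, hdh⟩ := exists_mem_invariantForms_mul_eq hd.ne_zero hd.mem_invariantForms hmem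
      (hd.dvd_of_X_one_dvd hmem (X_one_dvd_transfer hH hθ))
    obtain ⟨c, rfl⟩ : ∃ c, h = MvPolynomial.C c :=
      ⟨_, totalDegree_eq_zero_iff_eq_C.1 ((totalDegree_zero_iff_isHomogeneous _).2 hh.1)⟩
    have hc : c ≠ 0 := by
      rintro rfl
      rw [map_zero, mul_zero] at hdh
      exact hne hdh.symm
    refine ⟨c⁻¹ • θ, (homogeneousSubmodule _ F δ).smul_mem _ hθ, ?_⟩
    rw [map_smul, ← hdh, mul_comm, ← MvPolynomial.smul_eq_C_mul, inv_smul_smul₀ hc]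
  dvd_transfer hf := hd.dvd_of_X_one_dvd
    ⟨isHomogeneous_transfer hf, transfer_mem_invariantSubalgebra _⟩ (X_one_dvd_transfer hH hf)

end TransferDivisibility

section TransferNonvanishing

variable {F : Type} [Field F] [Fintype F]

lemma sum_pow_card_sub_one : ∑ x : F, x ^ (Fintype.card F - 1) = -1 := by
  rw [sum_pow_eq_ite (Nat.sub_pos_of_lt Fintype.one_lt_card).ne', if_pos dvd_rfl]

/-- `det M ^ (q - 1)` is the indicator function of the invertible matrices. -/
lemma sum_subgroup_eq_sum_matrix {n : ℕ} {H : Subgroup (GL (Fin n) F)} [Fintype H]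
    {P : Matrix (Fin n) (Fin n) F → Prop} [DecidablePred P] (hP : ∀ g : GL (Fin n) F, g ∈ H ↔ P g.1)
    (ψ : Matrix (Fin n) (Fin n) F → F) :
    ∑ g : H, ψ g.1.1 =
      ∑ M : Matrix (Fin n) (Fin n) F, if P M then M.det ^ (Fintype.card F - 1) * ψ M else 0 := by
  classical
  rw [← Finset.sum_filter]
  refine Finset.sum_bij_ne_zero (fun g _ _ => g.1.1) (fun g _ _ => ?_) (fun g _ _ h _ _ hgh => ?_)
    (fun M hM hne => ?_) fun g _ _ => ?_
  · exact Finset.mem_filter.2 ⟨Finset.mem_univ _, (hP g.1).1 g.2⟩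
  · exact Subtype.ext (Units.ext hgh)
  · have hdet : M.det ≠ 0 := by
      intro h
      rw [h, zero_pow (Nat.sub_pos_of_lt Fintype.one_lt_card).ne', zero_mul] at hne
      exact hne rfl
    rw [FiniteField.pow_card_sub_one_eq_one _ hdet, one_mul] at hne
    exact ⟨⟨GeneralLinearGroup.mkOfDetNeZero M hdet, (hP _).2 (Finset.mem_filter.1 hM).2⟩,
      Finset.mem_univ _, hne, rfl⟩
  · rw [FiniteField.pow_card_sub_one_eq_one _ (GeneralLinearGroup.det_ne_zero g.1), one_mul]

lemma sum_matrix_fin_two {R M : Type*} [Fintype R] [AddCommMonoid M]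
    (ψ : Matrix (Fin 2) (Fin 2) R → M) :
    ∑ A, ψ A = ∑ a, ∑ b, ∑ c, ∑ d, ψ !![a, b; c, d] := by
  simp only [← Fintype.sum_prod_type']
  refine Fintype.sum_equiv
    { toFun := fun A => (A 0 0, A 0 1, A 1 0, A 1 1)
      invFun := fun z => !![z.1, z.2.1; z.2.2.1, z.2.2.2]
      left_inv := fun A => (eta_fin_two A).symm
      right_inv := fun _ => rfl } _ _ fun A => congrArg ψ (eta_fin_two A)

lemma transfer_borelSubgroup_ne_zero :
    transfer (borelSubgroup F) (MvPolynomial.X 0 ^ (Fintype.card F - 1)) ≠ 0 := by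
  classical
  have := Fintype.ofFinite (borelSubgroup F)
  intro h
  have heval (g : Matrix (Fin 2) (Fin 2) F) : MvPolynomial.aeval (Pi.single 1 (1 : F))
      (lsub g (MvPolynomial.X 0 ^ (Fintype.card F - 1))) = g 0 1 ^ (Fintype.card F - 1) := by
    simp [lsub_X]
  have hsum := congrArg (MvPolynomial.aeval (Pi.single 1 (1 : F))) h
  rw [transfer_apply, map_sum, map_zero] at hsum
  simp only [heval] at hsum
  rw [sum_subgroup_eq_sum_matrix (P := fun M => M 1 0 = 0) (fun g => mem_borelSubgroup)
    fun M => M 0 1 ^ (Fintype.card F - 1), sum_matrix_fin_two] at hsum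
  simp [det_fin_two, mul_pow, ← Finset.mul_sum, ← Finset.sum_mul, sum_pow_card_sub_one] at hsum

lemma coeff_eq_zero_of_X_pow_dvd {σ R : Type*} [CommSemiring R] {f : MvPolynomial σ R} {i : σ}
    {k : ℕ} (hf : MvPolynomial.X i ^ k ∣ f) {s : σ →₀ ℕ} (hs : s i < k) : f.coeff s = 0 := by
  classical
  obtain ⟨h, rfl⟩ := hf
  rw [MvPolynomial.X_pow_eq_monomial, coeff_monomial_mul', if_neg]
  exact fun hle => hs.not_ge (by simpa using hle i)

lemma coeff_lsub_X_pow_mul_X_pow (g : Matrix (Fin 2) (Fin 2) F) {r : ℕ}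
    (hr : r < Fintype.card F) :
    (lsub g (MvPolynomial.X 0 ^ r * MvPolynomial.X 1 ^ (Fintype.card F * r))).coeff
      (Finsupp.single 0 r + Finsupp.single 1 (Fintype.card F * r)) = g 0 0 ^ r * g 1 1 ^ r := by
  have hx : MvPolynomial.X 1 ∣
      lsub g (MvPolynomial.X 0 ^ r) - (g 0 0 • MvPolynomial.X 0) ^ r := by
    rw [map_pow]
    refine dvd_trans ⟨MvPolynomial.C (g 0 1), ?_⟩ (sub_dvd_pow_sub_pow _ _ r)
    rw [lsub_X, Fin.sum_univ_two, add_sub_cancel_left, MvPolynomial.smul_eq_C_mul, mul_comm]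
  have hy : MvPolynomial.X 0 ^ Fintype.card F ∣
      lsub g (MvPolynomial.X 1 ^ (Fintype.card F * r)) -
        (g 1 1 • MvPolynomial.X 1 ^ Fintype.card F) ^ r := by
    rw [map_pow, pow_mul]
    refine dvd_trans ⟨MvPolynomial.C (g 1 0), ?_⟩ (sub_dvd_pow_sub_pow _ _ r)
    rw [lsub_X_pow_card, add_sub_cancel_right, MvPolynomial.smul_eq_C_mul, mul_comm]
  obtain ⟨u, hu⟩ := hx
  obtain ⟨v, hv⟩ := hy
  set q := Fintype.card F
  have hsplit : lsub g (MvPolynomial.X 0 ^ r * MvPolynomial.X 1 ^ (q * r)) =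
      MvPolynomial.monomial (Finsupp.single 0 r + Finsupp.single 1 (q * r))
          (g 0 0 ^ r * g 1 1 ^ r) +
        MvPolynomial.X 1 ^ (q * r + 1) * (u * MvPolynomial.C (g 1 1 ^ r)) +
        MvPolynomial.X 0 ^ q * (lsub g (MvPolynomial.X 0 ^ r) * v) := by
    have hu' := sub_eq_iff_eq_add.1 hu
    rw [map_mul, sub_eq_iff_eq_add.1 hv, monomial_add_single, ← C_mul_X_pow_eq_monomial,
      MvPolynomial.C_mul, mul_add, hu']
    simp only [MvPolynomial.smul_eq_C_mul, mul_pow, map_pow, ← pow_mul]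
    ring
  rw [hsplit, MvPolynomial.coeff_add, MvPolynomial.coeff_add, MvPolynomial.coeff_monomial,
    if_pos rfl, coeff_eq_zero_of_X_pow_dvd (dvd_mul_right _ _) (by simp),
    coeff_eq_zero_of_X_pow_dvd (dvd_mul_right _ _) (by simpa using hr), add_zero, add_zero]

lemma sum_sum_sub_mul_pow (s : F) :
    ∑ b : F, ∑ c : F, (s - b * c) ^ (Fintype.card F - 1) = 1 := by
  have hr : Fintype.card F - 1 ≠ 0 := (Nat.sub_pos_of_lt Fintype.one_lt_card).ne'
  have hinner (b : F) :
      ∑ c : F, (s - b * c) ^ (Fintype.card F - 1) = -b ^ (Fintype.card F - 1) := by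
    by_cases hb : b = 0
    · simp [hb, hr]
    · rw [FiniteField.pow_card_sub_one_eq_one b hb, ← sum_pow_card_sub_one]
      exact Equiv.sum_comp ((Equiv.mulLeft₀ b hb).trans (Equiv.subLeft s))
        fun c => c ^ (Fintype.card F - 1)
  simp only [hinner, Finset.sum_neg_distrib, sum_pow_card_sub_one, neg_neg]

lemma transfer_top_ne_zero :
    transfer (⊤ : Subgroup (GL (Fin 2) F)) (MvPolynomial.X 0 ^ (Fintype.card F - 1) *
        MvPolynomial.X 1 ^ (Fintype.card F * (Fintype.card F - 1))) ≠ 0 := by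
  classical
  have := Fintype.ofFinite (⊤ : Subgroup (GL (Fin 2) F))
  refine fun h => one_ne_zero (α := F) ?_
  have hr : Fintype.card F - 1 < Fintype.card F := Nat.sub_lt Fintype.card_pos one_pos
  set r := Fintype.card F - 1 with hrdef
  have hsum := congrArg (MvPolynomial.lcoeff F
    (Finsupp.single 0 r + Finsupp.single 1 (Fintype.card F * r))) h
  rw [transfer_apply, map_sum, map_zero] at hsum
  simp only [MvPolynomial.lcoeff_apply, coeff_lsub_X_pow_mul_X_pow _ hr] at hsum
  rw [sum_subgroup_eq_sum_matrix (P := fun _ => True) (fun g => by simp)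
    fun M => M 0 0 ^ r * M 1 1 ^ r, sum_matrix_fin_two] at hsum
  calc (1 : F) = ∑ a : F, a ^ r * ∑ d : F, d ^ r * ∑ b : F, ∑ c : F, (a * d - b * c) ^ r := by
        simp only [hrdef, sum_sum_sub_mul_pow, mul_one, sum_pow_card_sub_one, ← Finset.sum_mul,
          neg_mul_neg]
    _ = ∑ a : F, ∑ b : F, ∑ c : F, ∑ d : F, (a * d - b * c) ^ r * (a ^ r * d ^ r) := by
        refine Finset.sum_congr rfl fun a _ => ?_
        simp only [Finset.mul_sum]
        rw [Finset.sum_comm]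
        refine Finset.sum_congr rfl fun b _ => ?_
        rw [Finset.sum_comm]
        exact Finset.sum_congr rfl fun c _ => Finset.sum_congr rfl fun d _ => by ring
    _ = 0 := by simpa [det_fin_two] using hsum

lemma isTransferGenerator_borelSubgroup : IsTransferGenerator (borelSubgroup F)
    (Fintype.card F - 1) (MvPolynomial.X 1 ^ (Fintype.card F - 1)) :=
  isBoundaryGenerator_borelSubgroup.isTransferGenerator unipotentSubgroup_le_borelSubgroup
    (isHomogeneous_X_pow _ _) transfer_borelSubgroup_ne_zero

lemma isTransferGenerator_top : IsTransferGenerator (⊤ : Subgroup (GL (Fin 2) F))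
    ((Fintype.card F + 1) * (Fintype.card F - 1)) (lineProduct F ^ (Fintype.card F - 1)) :=
  isBoundaryGenerator_top.isTransferGenerator le_top (by
    convert (isHomogeneous_X_pow (R := F) (0 : Fin 2) (Fintype.card F - 1)).mul
      (isHomogeneous_X_pow (R := F) (1 : Fin 2) (Fintype.card F * (Fintype.card F - 1))) using 1
    ring) transfer_top_ne_zero

end TransferNonvanishing

section UnipotentIdentities

variable {F : Type*} [Field F] [Fintype F]

lemma sub_pow_card_sub_one_eq_sum {R : Type*} [CommRing R] [IsDomain R] [Algebra F R] (x y : R) :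
    (x - y) ^ (Fintype.card F - 1) =
      ∑ i ∈ Finset.range (Fintype.card F), y ^ i * x ^ (Fintype.card F - 1 - i) := by
  have hcard : (Fintype.card F : R) = 0 := by
    rw [← map_natCast (algebraMap F R), FiniteField.cast_card_eq_zero, map_zero]
  rw [geom_sum₂_comm]
  rcases eq_or_ne x y with rfl | hxy
  · rw [sub_self, zero_pow (Nat.sub_pos_of_lt Fintype.one_lt_card).ne', geom_sum₂_self, hcard,
      zero_mul]
  · refine mul_right_cancel₀ (sub_ne_zero.2 hxy) ?_
    have hfrob := map_sub (FiniteField.frobeniusAlgHom F R) x y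
    rw [FiniteField.coe_frobeniusAlgHom] at hfrob
    rw [pow_sub_one_mul Fintype.card_ne_zero, geom_sum₂_mul]
    exact hfrob

lemma eq_zero_of_forall_sum_mul_pow_eq {a : ℕ → F} {b : F}
    (h : ∀ c : F, ∑ i ∈ Finset.range (Fintype.card F), a i * c ^ i = b) {i : ℕ} (hi : i ≠ 0)
    (hiq : i < Fintype.card F) : a i = 0 := by
  let P : Polynomial F := ∑ j ∈ Finset.range (Fintype.card F), Polynomial.monomial j (a j)
  have hdeg : (P - Polynomial.C b).natDegree < Fintype.card F := by
    refine (Polynomial.natDegree_sub_C (a := b)).trans_lt <|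
      (Nat.le_sub_one_iff_lt Fintype.card_pos).1 ?_
    refine Polynomial.natDegree_sum_le_of_forall_le _ _ fun j hj => ?_
    exact (Polynomial.natDegree_monomial_le _).trans (Nat.le_sub_one_of_lt (Finset.mem_range.1 hj))
  have hP : P - Polynomial.C b = 0 := by
    refine Polynomial.eq_zero_of_natDegree_lt_card_of_eval_eq_zero _ Function.injective_id
      (fun c => ?_) hdeg
    simp [P, Polynomial.eval_finsetSum, h]
  simpa [P, Polynomial.finsetSum_coeff, Polynomial.coeff_monomial, Polynomial.coeff_C, hi, hiq]
    using congrArg (Polynomial.coeff · i) hP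

end UnipotentIdentities

section AnnihilatingFunctionals

variable {F : Type} [Field F]

lemma finrank_eq_one_of_injOn_functional {W : Type*} [AddCommGroup W] [Module F W]
    {K : Submodule F W} {ψ : W →ₗ[F] F} (hψ : ∀ w ∈ K, ψ w = 0 → w = 0) {w₀ : W} (hw₀ : w₀ ∈ K)
    (hne : ψ w₀ ≠ 0) : Module.finrank F K = 1 := by
  refine finrank_eq_one_iff'.2 ⟨⟨w₀, hw₀⟩, fun h => ?_, fun w => ⟨ψ w / ψ w₀, Subtype.ext ?_⟩⟩
  · have hw₀ : w₀ = 0 := congrArg Subtype.val h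
    exact hne (hw₀ ▸ map_zero ψ)
  · refine (sub_eq_zero.1 (hψ _ (K.sub_mem w.2 (K.smul_mem _ hw₀)) ?_)).symm
    simp [hne]

lemma eq_zero_of_forall_apply_X_pow_mul_X_pow {φ : Module.Dual F (MvPolynomial (Fin 2) F)}
    (h : ∀ a b, φ (MvPolynomial.X 0 ^ a * MvPolynomial.X 1 ^ b) = 0) : φ = 0 := by
  refine MvPolynomial.linearMap_ext fun s => LinearMap.ext_ring ?_
  rw [LinearMap.comp_apply, MvPolynomial.monomial_eq, Finsupp.prod_fintype _ _ fun _ => pow_zero _,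
    Fin.prod_univ_two, map_one, one_mul, h, LinearMap.comp_apply, LinearMap.zero_apply]

lemma lsub_diagonal_X_zero_pow (a : ℕ) (c : Fˣ) :
    lsub (Matrix.diagonal ![1, (c : F)]) (MvPolynomial.X 0 ^ a) = MvPolynomial.X 0 ^ a := by
  simp [lsub_X]

lemma comp_homogeneousComponent_mem_annihilatingFunctionals {n : ℕ} {H : Subgroup (GL (Fin n) F)}
    {ψ : Module.Dual F (MvPolynomial (Fin n) F)} {δ k : ℕ} {d : MvPolynomial (Fin n) F}
    (hd : d.IsHomogeneous δ)
    (hinv : ∀ g ∈ H, ∀ f : MvPolynomial (Fin n) F, f.IsHomogeneous k → ψ (lsub g.1 f) = ψ f)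
    (hann : ∀ f, ψ (d * f) = 0) :
    ψ ∘ₗ homogeneousComponent k ∈ annihilatingFunctionals H d k := by
  refine mem_annihilatingFunctionals.2
    ⟨mem_invariantFunctionals.2 ⟨fun f => ?_, fun g hg f => ?_⟩, fun f => ?_⟩
  · rw [LinearMap.comp_apply, LinearMap.comp_apply,
      homogeneousComponent_eq_self (homogeneousComponent_isHomogeneous _ _)]
  · rw [LinearMap.comp_apply, LinearMap.comp_apply, homogeneousComponent_lsub]
    exact hinv g hg _ (homogeneousComponent_isHomogeneous _ _)
  · suffices (ψ ∘ₗ homogeneousComponent k) ∘ₗ LinearMap.mulLeft F d = 0 from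
      LinearMap.congr_fun this f
    refine linearMap_ext_of_isHomogeneous fun e f hf => ?_
    simp only [LinearMap.comp_apply, LinearMap.mulLeft_apply, LinearMap.zero_apply,
      homogeneousComponent_of_isHomogeneous (hd.mul hf)]
    split_ifs
    · exact hann f
    · exact map_zero ψ

theorem finrank_annihilatingFunctionals_zero {n : ℕ} {H : Subgroup (GL (Fin n) F)} {δ : ℕ}
    {d : MvPolynomial (Fin n) F} (hd : d.IsHomogeneous δ) (hd0 : MvPolynomial.constantCoeff d = 0) :
    Module.finrank F (annihilatingFunctionals H d 0) = 1 := by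
  refine finrank_eq_one_of_injOn_functional (ψ := LinearMap.applyₗ 1) (fun φ hφ h => ?_)
    (comp_homogeneousComponent_mem_annihilatingFunctionals hd
      (ψ := (MvPolynomial.aeval (0 : Fin n → F)).toLinearMap)
      (fun g _ f _ => by simp only [AlgHom.toLinearMap_apply, aeval_lsub, mulVec_zero])
      fun f => by simp [hd0])
    (by simp [homogeneousComponent_eq_self (isHomogeneous_one _ _)])
  refine linearMap_ext_of_isHomogeneous fun e f hf => ?_
  rcases eq_or_ne e 0 with rfl | he
  · rw [totalDegree_eq_zero_iff_eq_C.1 ((totalDegree_zero_iff_isHomogeneous (Fin n)).2 hf),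
      ← mul_one (MvPolynomial.C _), ← MvPolynomial.smul_eq_C_mul, map_smul, LinearMap.zero_apply]
    exact smul_eq_zero_of_right _ h
  · exact apply_eq_zero_of_mem_invariantFunctionals (mem_annihilatingFunctionals.1 hφ).1 hf he.symm

variable [Fintype F] {H : Subgroup (GL (Fin 2) F)} {k : ℕ}
  {φ : Module.Dual F (MvPolynomial (Fin 2) F)}

lemma apply_mul_X_one_pow_eq_zero (hH : borelSubgroup F ≤ H) (hφ : φ ∈ invariantFunctionals H k)
    {f : MvPolynomial (Fin 2) F} (hf : ∀ c : Fˣ, lsub (Matrix.diagonal ![1, (c : F)]) f = f) {b : ℕ}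
    (hb : ¬ Fintype.card F - 1 ∣ b) : φ (f * MvPolynomial.X 1 ^ b) = 0 := by
  obtain ⟨c, hc⟩ := not_forall.1 (mt (FiniteField.forall_pow_eq_one_iff F b).1 hb)
  have hinv := hφ.2 (GeneralLinearGroup.mkOfDetNeZero (Matrix.diagonal ![1, (c : F)]) (by simp))
    (hH rfl) (f * MvPolynomial.X 1 ^ b)
  have hX : lsub (Matrix.diagonal ![1, (c : F)]) (MvPolynomial.X 1) =
      (c : F) • MvPolynomial.X 1 := by
    simp [lsub_X]
  have heq : (c : F) ^ b * φ (f * MvPolynomial.X 1 ^ b) = φ (f * MvPolynomial.X 1 ^ b) := by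
    rw [← smul_eq_mul, ← map_smul, ← mul_smul_comm, ← smul_pow, ← hX, ← map_pow]
    conv_lhs => rw [← hf c, ← map_mul]
    exact hinv
  by_contra hne
  exact hc (Units.ext (by simpa using (mul_eq_right₀ hne).1 heq))

lemma lsub_diagonal_orbitProduct (c : Fˣ) :
    lsub (Matrix.diagonal ![1, (c : F)]) (orbitProduct F) = orbitProduct F := by
  simp [orbitProduct_eq, lsub_X, smul_pow, FiniteField.pow_card_sub_one_eq_one]

lemma aeval_single_lsub_of_mem_borelSubgroup {f : MvPolynomial (Fin 2) F}
    (hf : f.IsHomogeneous ((Fintype.card F - 1) * k)) {g : GL (Fin 2) F}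
    (hg : g ∈ borelSubgroup F) :
    MvPolynomial.aeval (Pi.single 0 (1 : F)) (lsub g.1 f) =
      MvPolynomial.aeval (Pi.single 0 (1 : F)) f := by
  have hg1 : g.1 1 0 = 0 := mem_borelSubgroup.1 hg
  have hg0 : g.1 0 0 ≠ 0 := fun h0 =>
    GeneralLinearGroup.det_ne_zero g (by rw [det_fin_two, h0, hg1, zero_mul, mul_zero, sub_zero])
  have hvec : g.1 *ᵥ Pi.single 0 (1 : F) =
      Matrix.scalar (Fin 2) (g.1 0 0) *ᵥ Pi.single 0 (1 : F) := by
    ext i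
    fin_cases i <;> simp [hg1]
  have hsmul := congrArg (MvPolynomial.aeval (Pi.single 0 (1 : F))) (lsub_scalar (g.1 0 0) hf)
  rw [pow_mul, FiniteField.pow_card_sub_one_eq_one _ hg0, one_pow, one_smul, aeval_lsub] at hsmul
  rw [aeval_lsub, ← hsmul]
  exact congrArg (fun v => MvPolynomial.aeval v f) hvec

lemma eq_zero_of_mem_annihilatingFunctionals_borelSubgroup
    (hφ : φ ∈ annihilatingFunctionals (borelSubgroup F)
      (MvPolynomial.X 1 ^ (Fintype.card F - 1)) k) (hX : φ (MvPolynomial.X 0 ^ k) = 0) :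
    φ = 0 := by
  obtain ⟨hφ, hann⟩ := mem_annihilatingFunctionals.1 hφ
  refine eq_zero_of_forall_apply_X_pow_mul_X_pow fun a b => ?_
  by_cases hb : Fintype.card F - 1 ∣ b
  · rcases eq_or_ne b 0 with rfl | hb0
    · rw [pow_zero, mul_one]
      rcases eq_or_ne a k with rfl | ha
      · exact hX
      · exact apply_eq_zero_of_mem_invariantFunctionals hφ (isHomogeneous_X_pow _ _) ha.symm
    · rw [mul_comm, ← Nat.add_sub_of_le (Nat.le_of_dvd (Nat.pos_of_ne_zero hb0) hb), pow_add,
        mul_assoc, hann]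
  · exact apply_mul_X_one_pow_eq_zero le_rfl hφ (lsub_diagonal_X_zero_pow a) hb

theorem finrank_annihilatingFunctionals_borelSubgroup (k : ℕ) :
    Module.finrank F (annihilatingFunctionals (borelSubgroup F)
      (MvPolynomial.X 1 ^ (Fintype.card F - 1)) ((Fintype.card F - 1) * k)) = 1 := by
  have hr : Fintype.card F - 1 ≠ 0 := (Nat.sub_pos_of_lt Fintype.one_lt_card).ne'
  refine finrank_eq_one_of_injOn_functional
    (ψ := LinearMap.applyₗ (MvPolynomial.X 0 ^ ((Fintype.card F - 1) * k)))
    (fun φ => eq_zero_of_mem_annihilatingFunctionals_borelSubgroup)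
    (comp_homogeneousComponent_mem_annihilatingFunctionals (isHomogeneous_X_pow _ _)
      (ψ := (MvPolynomial.aeval (Pi.single 0 (1 : F))).toLinearMap)
      (fun g hg f hf => aeval_single_lsub_of_mem_borelSubgroup hf hg) fun f => by simp [hr]) ?_
  rw [LinearMap.applyₗ_apply_apply, LinearMap.comp_apply,
    homogeneousComponent_eq_self (isHomogeneous_X_pow _ _)]
  simp

lemma apply_mul_X_pow_eq_zero_of_unipotent (hH : unipotentSubgroup F ≤ H)
    (hφ : φ ∈ invariantFunctionals H k) {h : MvPolynomial (Fin 2) F}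
    (hh : h ∈ invariantSubalgebra (unipotentSubgroup F)) {i : ℕ} (hi : i ≠ 0)
    (hiq : i < Fintype.card F) :
    φ (h * (MvPolynomial.X 0 ^ (Fintype.card F - 1 - i) * MvPolynomial.X 1 ^ i)) = 0 := by
  have hsum (c : F) : ∑ j ∈ Finset.range (Fintype.card F),
      φ (h * (MvPolynomial.X 0 ^ (Fintype.card F - 1 - j) * MvPolynomial.X 1 ^ j)) * c ^ j =
        φ (h * MvPolynomial.X 0 ^ (Fintype.card F - 1)) := by
    have hmem : GeneralLinearGroup.upperRightHom (-c) ∈ unipotentSubgroup F :=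
      mem_unipotentSubgroup.2 ⟨-c, rfl⟩
    rw [← hφ.2 (GeneralLinearGroup.upperRightHom (-c)) (hH hmem), map_mul,
      mem_invariantSubalgebra.1 hh _ hmem, map_pow, lsub_upperRightHom_X_zero, neg_smul,
      ← sub_eq_add_neg, sub_pow_card_sub_one_eq_sum (F := F), Finset.mul_sum, map_sum]
    refine Finset.sum_congr rfl fun j _ => ?_
    rw [smul_pow, smul_mul_assoc, mul_smul_comm, map_smul, smul_eq_mul, mul_comm,
      mul_comm (MvPolynomial.X 1 ^ j)]
  exact eq_zero_of_forall_sum_mul_pow_eq (a := fun j =>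
    φ (h * (MvPolynomial.X 0 ^ (Fintype.card F - 1 - j) * MvPolynomial.X 1 ^ j))) hsum hi hiq

lemma apply_mul_X_pow_mul_X_pow_eq_zero_of_unipotent (hH : unipotentSubgroup F ≤ H)
    (hφ : φ ∈ invariantFunctionals H k) {h : MvPolynomial (Fin 2) F}
    (hh : h ∈ invariantSubalgebra (unipotentSubgroup F)) {a b : ℕ} (ha : a < Fintype.card F - 1)
    (hb : Fintype.card F - 1 ≤ b) : φ (h * MvPolynomial.X 0 ^ a * MvPolynomial.X 1 ^ b) = 0 := by
  have hmem : h * MvPolynomial.X 1 ^ (b - (Fintype.card F - 1 - a)) ∈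
      invariantSubalgebra (unipotentSubgroup F) :=
    (invariantSubalgebra _).mul_mem hh
      ((invariantSubalgebra _).pow_mem X_one_mem_invariantSubalgebra _)
  convert apply_mul_X_pow_eq_zero_of_unipotent hH hφ hmem
    (i := Fintype.card F - 1 - a) (by omega) (by omega) using 2
  rw [Nat.sub_sub_self ha.le, ← Nat.sub_add_cancel (show Fintype.card F - 1 - a ≤ b by omega),
    pow_add _ (b - (Fintype.card F - 1 - a)), Nat.add_sub_cancel]
  ring

lemma apply_orbitProduct_pow_mul_eq_zero_of_lt {k : ℕ}
    (hφ : φ ∈ annihilatingFunctionals (⊤ : Subgroup (GL (Fin 2) F))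
      (lineProduct F ^ (Fintype.card F - 1)) ((Fintype.card F - 1) * k))
    (hX : 1 < k → φ (MvPolynomial.X 0 ^ (Fintype.card F - 1) *
      MvPolynomial.X 1 ^ ((Fintype.card F - 1) * (k - 1))) = 0) {j a b : ℕ} (hb : b ≠ 0)
    (ha : a < Fintype.card F)
    (hdeg : Fintype.card F * j + a + b = (Fintype.card F - 1) * k) :
    φ (orbitProduct F ^ j * MvPolynomial.X 0 ^ a * MvPolynomial.X 1 ^ b) = 0 := by
  obtain ⟨hφ, hann⟩ := mem_annihilatingFunctionals.1 hφ
  by_cases hrb : Fintype.card F - 1 ∣ b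
  swap
  · refine apply_mul_X_one_pow_eq_zero le_top hφ (fun c => ?_) hrb
    rw [map_mul, map_pow, lsub_diagonal_orbitProduct, lsub_diagonal_X_zero_pow]
  have hle : Fintype.card F - 1 ≤ b := Nat.le_of_dvd (Nat.pos_of_ne_zero hb) hrb
  rcases (Nat.le_sub_one_of_lt ha).lt_or_eq with hlt | rfl
  · exact apply_mul_X_pow_mul_X_pow_eq_zero_of_unipotent le_top hφ
      ((invariantSubalgebra _).pow_mem orbitProduct_mem_invariantForms.2 j) hlt hle
  · have hrj : Fintype.card F - 1 ∣ j := by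
      obtain ⟨c, rfl⟩ := hrb
      refine (Nat.dvd_add_left (dvd_mul_right (Fintype.card F - 1) (j + 1 + c))).1 ⟨k, ?_⟩
      have hq : Fintype.card F * j = (Fintype.card F - 1) * j + j := by
        rw [← add_one_mul, Nat.sub_one_add_one Fintype.card_ne_zero]
      rw [← hdeg, hq]
      ring
    rcases eq_or_ne j 0 with rfl | hj
    · have hk : 1 < k := by
        refine Nat.lt_of_mul_lt_mul_left (a := Fintype.card F - 1) ?_
        omega
      have hbk : b = (Fintype.card F - 1) * (k - 1) := by
        rw [Nat.mul_sub_one]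
        omega
      rw [pow_zero, one_mul, hbk, hX hk]
    · have hlej : Fintype.card F - 1 ≤ j := Nat.le_of_dvd (Nat.pos_of_ne_zero hj) hrj
      convert hann (orbitProduct F ^ (j - (Fintype.card F - 1)) *
        MvPolynomial.X 0 ^ (Fintype.card F - 1) *
          MvPolynomial.X 1 ^ (b - (Fintype.card F - 1))) using 2
      rw [lineProduct, ← Nat.sub_add_cancel hlej, ← Nat.sub_add_cancel hle, pow_add _ (j - _),
        pow_add _ (b - _), Nat.add_sub_cancel, Nat.add_sub_cancel]
      ring

/-- Reducing the exponent of `x` with `x ^ q = D + x y ^ (q - 1)`, where `D` is the orbit product,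
leaves multiples of `y` that are killed by the torus, by the unipotent group, or by divisibility by
`(y D) ^ (q - 1)`. -/
lemma apply_orbitProduct_pow_mul_eq_zero {k : ℕ}
    (hφ : φ ∈ annihilatingFunctionals (⊤ : Subgroup (GL (Fin 2) F))
      (lineProduct F ^ (Fintype.card F - 1)) ((Fintype.card F - 1) * k))
    (hX : 1 < k → φ (MvPolynomial.X 0 ^ (Fintype.card F - 1) *
      MvPolynomial.X 1 ^ ((Fintype.card F - 1) * (k - 1))) = 0) (j a : ℕ) {b : ℕ} (hb : b ≠ 0)
    (hdeg : Fintype.card F * j + a + b = (Fintype.card F - 1) * k) :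
    φ (orbitProduct F ^ j * MvPolynomial.X 0 ^ a * MvPolynomial.X 1 ^ b) = 0 := by
  have hq : 1 < Fintype.card F := Fintype.one_lt_card
  induction a using Nat.strong_induction_on generalizing j b with
  | _ a ih =>
    rcases lt_or_ge a (Fintype.card F) with ha | ha
    · exact apply_orbitProduct_pow_mul_eq_zero_of_lt hφ hX hb ha hdeg
    have hx : MvPolynomial.X 0 ^ a = orbitProduct F * MvPolynomial.X 0 ^ (a - Fintype.card F) +
        MvPolynomial.X 0 ^ (a - Fintype.card F + 1) * MvPolynomial.X 1 ^ (Fintype.card F - 1) := by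
      rw [orbitProduct_eq, ← Nat.sub_add_cancel ha, pow_add, Nat.add_sub_cancel]
      ring
    have hsplit : orbitProduct F ^ j * MvPolynomial.X 0 ^ a * MvPolynomial.X 1 ^ b =
        orbitProduct F ^ (j + 1) * MvPolynomial.X 0 ^ (a - Fintype.card F) * MvPolynomial.X 1 ^ b +
          orbitProduct F ^ j * MvPolynomial.X 0 ^ (a - Fintype.card F + 1) *
            MvPolynomial.X 1 ^ (b + (Fintype.card F - 1)) := by
      rw [hx]
      ring
    rw [hsplit, map_add, ih _ (by omega) (j + 1) hb, ih _ (by omega) j (by omega), add_zero]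
    · omega
    · rw [mul_add_one]
      omega

lemma eq_zero_of_mem_annihilatingFunctionals_top {k : ℕ} (hk : k ≠ 0)
    (hφ : φ ∈ annihilatingFunctionals (⊤ : Subgroup (GL (Fin 2) F))
      (lineProduct F ^ (Fintype.card F - 1)) ((Fintype.card F - 1) * k))
    (hX : 1 < k → φ (MvPolynomial.X 0 ^ (Fintype.card F - 1) *
      MvPolynomial.X 1 ^ ((Fintype.card F - 1) * (k - 1))) = 0) : φ = 0 := by
  have hpos (a b : ℕ) (hb : b ≠ 0) : φ (MvPolynomial.X 0 ^ a * MvPolynomial.X 1 ^ b) = 0 := by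
    by_cases hdeg : (Fintype.card F - 1) * k = a + b
    · simpa using apply_orbitProduct_pow_mul_eq_zero hφ hX 0 a hb (by simp [hdeg])
    · exact apply_eq_zero_of_mem_invariantFunctionals (mem_annihilatingFunctionals.1 hφ).1
        ((isHomogeneous_X_pow _ _).mul (isHomogeneous_X_pow _ _)) hdeg
  have hr : (Fintype.card F - 1) * k ≠ 0 :=
    mul_ne_zero (Nat.sub_pos_of_lt Fintype.one_lt_card).ne' hk
  have hinv := (mem_annihilatingFunctionals.1 hφ).1
  refine eq_zero_of_forall_apply_X_pow_mul_X_pow fun a b => ?_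
  rcases eq_or_ne b 0 with rfl | hb
  · rcases eq_or_ne a 0 with rfl | ha
    · exact apply_eq_zero_of_mem_invariantFunctionals hinv
        ((isHomogeneous_X_pow _ _).mul (isHomogeneous_X_pow _ _)) hr
    · rw [← hinv.2 (GeneralLinearGroup.mkOfDetNeZero !![0, 1; 1, 0] (by simp [det_fin_two]))
        trivial]
      simpa [lsub_X] using hpos 0 a ha
  · exact hpos a b hb

lemma sum_aeval_mul_lineProduct_pow (f : MvPolynomial (Fin 2) F) :
    ∑ v : Fin 2 → F, MvPolynomial.aeval v (lineProduct F ^ (Fintype.card F - 1) * f) = 0 := by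
  refine Finset.sum_eq_zero fun v _ => ?_
  have hr : Fintype.card F - 1 ≠ 0 := (Nat.sub_pos_of_lt Fintype.one_lt_card).ne'
  simp [lineProduct_eq, FiniteField.pow_card, hr]

lemma sum_aeval_X_pow_mul_X_pow {a b : ℕ} (ha : a ≠ 0) (hb : b ≠ 0) (hra : Fintype.card F - 1 ∣ a)
    (hrb : Fintype.card F - 1 ∣ b) :
    ∑ v : Fin 2 → F, MvPolynomial.aeval v
      (MvPolynomial.X 0 ^ a * MvPolynomial.X 1 ^ b : MvPolynomial (Fin 2) F) = 1 := by
  have hsum := sum_prod_pow (ι := Fin 2) (K := F) ![a, b]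
  simp only [Fin.prod_univ_two, cons_val_zero, cons_val_one] at hsum
  simp [hsum, sum_pow_eq_ite, ha, hb, hra, hrb]

theorem finrank_annihilatingFunctionals_top (k : ℕ) :
    Module.finrank F (annihilatingFunctionals (⊤ : Subgroup (GL (Fin 2) F))
      (lineProduct F ^ (Fintype.card F - 1)) ((Fintype.card F - 1) * k)) =
      if k = 1 then 0 else 1 := by
  have hr : Fintype.card F - 1 ≠ 0 := (Nat.sub_pos_of_lt Fintype.one_lt_card).ne'
  have hL := (isHomogeneous_lineProduct (F := F)).pow (Fintype.card F - 1)
  split_ifs with hk1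
  · subst hk1
    rw [(Submodule.eq_bot_iff _).2 fun φ hφ =>
      eq_zero_of_mem_annihilatingFunctionals_top one_ne_zero hφ fun h => absurd h (lt_irrefl 1),
      finrank_bot]
  rcases eq_or_ne k 0 with rfl | hk0
  · exact finrank_annihilatingFunctionals_zero hL (by simp [lineProduct_eq, hr])
  · refine finrank_eq_one_of_injOn_functional (ψ := LinearMap.applyₗ
      (MvPolynomial.X 0 ^ (Fintype.card F - 1) *
        MvPolynomial.X 1 ^ ((Fintype.card F - 1) * (k - 1))))
      (fun φ hφ h => eq_zero_of_mem_annihilatingFunctionals_top hk0 hφ fun _ => h)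
      (comp_homogeneousComponent_mem_annihilatingFunctionals hL
        (ψ := ∑ v : Fin 2 → F, (MvPolynomial.aeval v).toLinearMap)
        (fun g _ f _ => by simpa using sum_aeval_lsub (K := F) g f)
        fun f => by simpa using sum_aeval_mul_lineProduct_pow f) ?_
    have hdeg : Fintype.card F - 1 + (Fintype.card F - 1) * (k - 1) =
        (Fintype.card F - 1) * k := by
      rw [add_comm, ← mul_add_one, Nat.sub_one_add_one hk0]
    have hhom := (isHomogeneous_X_pow (R := F) (0 : Fin 2) (Fintype.card F - 1)).mul
      (isHomogeneous_X_pow (R := F) (1 : Fin 2) ((Fintype.card F - 1) * (k - 1)))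
    rw [hdeg] at hhom
    rw [LinearMap.applyₗ_apply_apply, LinearMap.comp_apply, homogeneousComponent_eq_self hhom,
      LinearMap.sum_apply]
    exact (sum_aeval_X_pow_mul_X_pow hr (mul_ne_zero hr (by omega)) dvd_rfl
      (dvd_mul_right _ _)).trans_ne one_ne_zero

end AnnihilatingFunctionals

section HilbertQuasipolynomial

lemma ediv_eq_ediv_sub_one_add (z : ℤ) {d : ℤ} (hd : 0 < d) :
    z / d = (z - 1) / d + if d ∣ z then 1 else 0 := by
  split_ifs with hdvd
  · obtain ⟨c, rfl⟩ := hdvd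
    rw [Int.mul_ediv_cancel_left c hd.ne', (Int.ediv_eq_iff_of_pos hd (y := c - 1)).2]
    · ring
    · constructor <;> linarith [mul_comm d c, sub_one_mul c d]
  · have hpos : 0 < z % d :=
      (Int.emod_nonneg z hd.ne').lt_of_ne' (mt Int.dvd_of_emod_eq_zero hdvd)
    rw [add_zero, eq_comm, Int.ediv_eq_iff_of_pos hd]
    constructor <;> linarith [Int.ediv_mul_add_emod z d, Int.emod_lt_of_pos z hd]

lemma neg_one_sub_ediv (z : ℤ) {d : ℤ} (hd : 0 < d) : (-1 - z) / d = -1 - z / d := by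
  rw [Int.ediv_eq_iff_of_pos hd, sub_mul, neg_one_mul]
  constructor <;>
    linarith [Int.ediv_mul_add_emod z d, Int.emod_lt_of_pos z hd, Int.emod_nonneg z hd.ne']

lemma ediv_second_difference {d a b : ℤ} (hd : 0 < d) (h : d ∣ a ∨ d ∣ b) (z : ℤ) :
    z / d - (z - a) / d - (z - b) / d + (z - (a + b)) / d = 0 := by
  rcases h with ⟨c, rfl⟩ | ⟨c, rfl⟩
  · rw [add_comm (d * c), ← sub_sub z b, Int.sub_mul_ediv_left _ _ hd.ne',
      Int.sub_mul_ediv_left _ _ hd.ne']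
    ring
  · rw [← sub_sub z a, Int.sub_mul_ediv_left _ _ hd.ne', Int.sub_mul_ediv_left _ _ hd.ne']
    ring

lemma dvd_geom_sum_or_dvd_geom_sum_sub_one (q : ℤ) (m : ℕ) :
    q ∣ ∑ i ∈ Finset.range m, q ^ i ∨ q ∣ ∑ i ∈ Finset.range m, q ^ i - 1 := by
  cases m with
  | zero => exact Or.inl (dvd_zero q)
  | succ m =>
    rw [geom_sum_succ, add_sub_cancel_right]
    exact Or.inr (dvd_mul_right q _)

lemma add_one_dvd_geom_sum_or_dvd_geom_sum_sub_one (q : ℤ) (m : ℕ) :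
    q + 1 ∣ ∑ i ∈ Finset.range m, q ^ i ∨ q + 1 ∣ ∑ i ∈ Finset.range m, q ^ i - 1 := by
  induction m with
  | zero => exact Or.inl (dvd_zero _)
  | succ m ih =>
    rw [geom_sum_succ, add_sub_cancel_right]
    refine ih.symm.imp (fun ⟨c, hc⟩ => ⟨q * c + 1, ?_⟩) fun h => h.mul_left q
    linear_combination q * hc

/-- The function `f` is the extension by a quasi-polynomial, to all integers, of the coefficients of
`1 / ((1 - u ^ q) * (1 - u ^ s))`. Only the consequences for two values of `s` are recorded: the
reflection formula, and the vanishing second difference with steps `a` and `a - 1`, where `a` is a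
geometric sum of ratio `q`. -/
structure IsHilbertQuasipolynomial (q s : ℕ) (f : ℤ → ℤ) : Prop where
  eq_ite_add (z : ℤ) : f z = (if (q : ℤ) ∣ z then 1 else 0) + f (z - s)
  eq_zero (z : ℤ) : -s ≤ z → z < 0 → f z = 0
  reflection (z : ℤ) : f 0 + f 1 - f (1 - z) = 1 + f (z - 2 * s)
  second_difference (m : ℕ) (z : ℤ) :
    f z - f (z - ∑ i ∈ Finset.range m, (q : ℤ) ^ i) -
      f (z - (∑ i ∈ Finset.range m, (q : ℤ) ^ i - 1)) +
        f (z - (∑ i ∈ Finset.range m, (q : ℤ) ^ i + (∑ i ∈ Finset.range m, (q : ℤ) ^ i - 1))) = 0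

theorem isHilbertQuasipolynomial_one {q : ℕ} (hq : 1 < q) :
    IsHilbertQuasipolynomial q 1 fun z => z / q + 1 where
  eq_ite_add z := by
    rw [ediv_eq_ediv_sub_one_add z (by omega), Nat.cast_one]
    ring
  eq_zero z hz hz0 := by
    rw [Int.ediv_eq_neg_one_of_neg_of_le hz0 (by omega), neg_add_cancel]
  reflection z := by
    have h1 : 1 - z = -1 - (z - 2) := by ring
    rw [h1, neg_one_sub_ediv _ (by omega), Int.zero_ediv,
      Int.ediv_eq_zero_of_lt zero_le_one (by omega)]
    push_cast
    ring
  second_difference m z := by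
    linear_combination ediv_second_difference (d := q) (by omega)
      (dvd_geom_sum_or_dvd_geom_sum_sub_one q m) z

theorem isHilbertQuasipolynomial_add_one {q : ℕ} (hq : 1 < q) :
    IsHilbertQuasipolynomial q (q + 1) fun z => z / q - (z - 1) / (q + 1) where
  eq_ite_add z := by
    have h1 : z - (q + 1 : ℕ) = z - 1 - q * 1 := by push_cast; ring
    have h2 : z - (q + 1 : ℕ) - 1 = z - 1 - (q + 1) * 1 := by push_cast; ring
    rw [h2, Int.sub_mul_ediv_left _ _ (by omega), h1, Int.sub_mul_ediv_left _ _ (by omega),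
      ediv_eq_ediv_sub_one_add z (by omega)]
    ring
  eq_zero z hz hz0 := by
    rw [Nat.cast_add_one] at hz
    rw [sub_eq_zero]
    rcases hz.eq_or_lt with rfl | hz
    · rw [(Int.ediv_eq_iff_of_pos (y := -2) (by omega)).2 (by omega),
        (Int.ediv_eq_iff_of_pos (y := -2) (by omega)).2 (by omega)]
    · rw [Int.ediv_eq_neg_one_of_neg_of_le hz0 (by omega),
        Int.ediv_eq_neg_one_of_neg_of_le (by omega) (by omega)]
  reflection z := by
    have h1 : 1 - z = -1 - (z - 2) := by ring
    have h2 : -1 - (z - 2) - 1 = -1 - (z - 1) := by ring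
    have h3 : z - 2 * (q + 1 : ℕ) = z - 2 - q * 2 := by push_cast; ring
    have h4 : z - 2 * (q + 1 : ℕ) - 1 = z - 1 - (q + 1) * 2 := by push_cast; ring
    rw [h4, h1, h2, neg_one_sub_ediv _ (by omega), neg_one_sub_ediv _ (by omega), h3,
      Int.sub_mul_ediv_left _ _ (by omega), Int.sub_mul_ediv_left _ _ (by omega),
      Int.zero_ediv, Int.ediv_eq_neg_one_of_neg_of_le (by omega) (by omega),
      Int.ediv_eq_zero_of_lt zero_le_one (by omega), sub_self, Int.zero_ediv]
    ring
  second_difference m z := by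
    simp only [sub_right_comm z _ 1]
    linear_combination ediv_second_difference (d := q) (by omega)
      (dvd_geom_sum_or_dvd_geom_sum_sub_one q m) z -
        ediv_second_difference (d := q + 1) (by omega)
          (add_one_dvd_geom_sum_or_dvd_geom_sum_sub_one q m) (z - 1)

namespace IsHilbertQuasipolynomial

variable {q s : ℕ} {f : ℤ → ℤ}

lemma eq_of_recurrence (hf : IsHilbertQuasipolynomial q s f) (hs : s ≠ 0) {p : ℕ → ℕ}
    (hp : ∀ k, p k = (if q ∣ k then 1 else 0) + if s ≤ k then p (k - s) else 0) (k : ℕ) :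
    (p k : ℤ) = f k := by
  induction k using Nat.strong_induction_on with
  | _ k ih =>
    rw [hp, hf.eq_ite_add]
    push_cast [Int.natCast_dvd_natCast]
    congr 1
    split_ifs with hk
    · rw [ih _ (by omega), Nat.cast_sub hk]
    · exact (hf.eq_zero _ (by omega) (by omega)).symm

end IsHilbertQuasipolynomial

end HilbertQuasipolynomial

section SeriesOfSecondDifference

lemma mk_ite_lt_mul_one_sub (R : Type*) [CommRing R] (a : ℕ) :
    PowerSeries.mk (fun z => if z < a then (1 : R) else 0) * (1 - PowerSeries.X) =
      1 - PowerSeries.X ^ a := by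
  have hgeom : PowerSeries.mk (fun z => if z < a then (1 : R) else 0) =
      ∑ i ∈ Finset.range a, PowerSeries.X ^ i := by
    ext z
    simp [PowerSeries.coeff_X_pow]
  rw [hgeom, geom_sum_mul_neg]

lemma coeff_one_sub_X_pow_mul_one_sub_X_pow_mul {R : Type*} [CommRing R] (a b : ℕ) (p : R⟦X⟧)
    (z : ℕ) :
    PowerSeries.coeff z ((1 - PowerSeries.X ^ a) * (1 - PowerSeries.X ^ b) * p) =
      PowerSeries.coeff z p - (if a ≤ z then PowerSeries.coeff (z - a) p else 0) -
        (if b ≤ z then PowerSeries.coeff (z - b) p else 0) +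
          if a + b ≤ z then PowerSeries.coeff (z - (a + b)) p else 0 := by
  have hexp : (1 - PowerSeries.X ^ a) * (1 - PowerSeries.X ^ b) * p =
      p - PowerSeries.X ^ a * p - PowerSeries.X ^ b * p + PowerSeries.X ^ (a + b) * p := by
    ring
  simp only [hexp, map_add, map_sub, PowerSeries.coeff_X_pow_mul']

theorem mk_eq_of_second_difference {R : Type*} [CommRing R] {f : ℤ → R} {a : ℕ}
    (hf : ∀ z : ℤ, f z - f (z - a) - f (z - (a - 1)) + f (z - (a + (a - 1))) = 0) {h : ℕ → R}
    (hle : ∀ z ≤ a, h z = f z)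
    (hge : ∀ z k, z + k = 2 * a → k ≤ a → h z = f 0 + f 1 - f (1 - k))
    (hgt : ∀ z, 2 * a < z → h z = 0) :
    PowerSeries.mk h = PowerSeries.C (f 0) * PowerSeries.X ^ (2 * a) +
      (PowerSeries.C (f 0) * PowerSeries.X ^ (a - 1) + PowerSeries.C (f 1) * PowerSeries.X ^ a) *
        PowerSeries.mk (fun z => if z < a then 1 else 0) +
      (1 - PowerSeries.X ^ a) * (1 - PowerSeries.X ^ (a - 1)) * PowerSeries.mk fun z => f z := by
  rcases Nat.eq_zero_or_eq_succ_pred a with rfl | ha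
  · ext z
    rcases eq_or_ne z 0 with rfl | hz
    · simp [hle]
    · simp [hgt z (by omega), PowerSeries.coeff_C, hz,
        show (PowerSeries.mk fun _ => (0 : R)) = 0 from rfl]
  obtain ⟨b, rfl⟩ : ∃ b, a = b + 1 := ⟨_, ha⟩
  ext z
  have hz := hf z
  rw [Nat.add_sub_cancel, map_add, coeff_one_sub_X_pow_mul_one_sub_X_pow_mul]
  simp only [add_mul, mul_assoc, map_add, PowerSeries.coeff_C_mul,
    PowerSeries.coeff_X_pow_mul', PowerSeries.coeff_X_pow, PowerSeries.coeff_mk]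
  push_cast [add_sub_cancel_right] at hz
  have hcast {c : ℕ} (hc : c ≤ z) : ((z - c : ℕ) : ℤ) = z - c := Nat.cast_sub hc
  rcases lt_or_ge z (b + 1) with hzb | hzb
  · rw [hle z hzb.le]
    split_ifs <;> first | omega | ring_nf
    simp [show z = b by omega]
  rcases lt_or_ge (2 * (b + 1)) z with hz2 | hz2
  · rw [hgt z hz2]
    split_ifs <;> first | omega | skip
    rw [hcast (by omega), hcast (by omega), hcast (by omega)]
    push_cast
    linear_combination -hz
  have hk : (1 : ℤ) - (2 * (b + 1) - z : ℕ) = z - (b + 1 + b) := by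
    push_cast [Nat.cast_sub hz2]
    ring
  rw [hge z (2 * (b + 1) - z) (by omega) (by omega), hk]
  split_ifs <;> first | omega | skip
  all_goals
    rw [hcast (c := b + 1) (by omega), hcast (c := b) (by omega)]
    push_cast
  · rw [hcast (by omega)]
    push_cast
    rw [show (z : ℤ) - (b + 1 + b) = 1 by omega] at hz ⊢
    linear_combination -hz
  · linear_combination -hz
  · rw [hcast (by omega)]
    push_cast
    rw [show (z : ℤ) - (b + 1 + b) = 0 by omega] at hz ⊢
    linear_combination -hz

end SeriesOfSecondDifference

section HilbertSeries

lemma mk_eq_expand {R : Type*} [CommRing R] {r : ℕ} (hr : r ≠ 0) {c : ℕ → R}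
    (hc : ∀ d, ¬ r ∣ d → c d = 0) :
    PowerSeries.mk c = PowerSeries.expand r hr (PowerSeries.mk fun z => c (r * z)) := by
  ext d
  rw [PowerSeries.coeff_mk, PowerSeries.coeff_expand]
  split_ifs with hd
  · rw [PowerSeries.coeff_mk, Nat.mul_div_cancel' hd]
  · exact hc d hd

lemma expand_mk_ite_lt {K : Type*} [Field K] {r : ℕ} (hr : r ≠ 0) (a : ℕ) :
    PowerSeries.expand r hr (PowerSeries.mk fun z => if z < a then (1 : K) else 0) =
      (1 - PowerSeries.X ^ (r * a)) * (1 - PowerSeries.X ^ r)⁻¹ := by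
  rw [PowerSeries.eq_mul_inv_iff_mul_eq (by simp [hr])]
  have hmul := congrArg (PowerSeries.expand r hr) (mk_ite_lt_mul_one_sub K a)
  simpa only [map_mul, map_sub, map_one, map_pow, PowerSeries.expand_X, ← pow_mul] using hmul

namespace IsHilbertQuasipolynomial

variable {q s : ℕ} {f : ℤ → ℤ}

lemma mk_mul_one_sub_mul_one_sub (hf : IsHilbertQuasipolynomial q s f) (hq : q ≠ 0) :
    PowerSeries.mk (fun z : ℕ => (f z : ℚ)) * (1 - PowerSeries.X ^ s) *
      (1 - PowerSeries.X ^ q) = 1 := by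
  have hs : PowerSeries.mk (fun z : ℕ => (f z : ℚ)) * (1 - PowerSeries.X ^ s) =
      PowerSeries.expand q hq (PowerSeries.mk 1) := by
    ext z
    have hshift : (if s ≤ z then (f (z - s : ℕ) : ℚ) else 0) = f (z - s) := by
      split_ifs with hz
      · rw [Nat.cast_sub hz]
      · rw [hf.eq_zero _ (by omega) (by omega), Int.cast_zero]
    rw [mul_one_sub, mul_comm, map_sub, PowerSeries.coeff_X_pow_mul', PowerSeries.coeff_mk,
      PowerSeries.coeff_mk, PowerSeries.coeff_expand, hshift, hf.eq_ite_add]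
    push_cast [Int.natCast_dvd_natCast]
    simp only [add_sub_cancel_right, PowerSeries.coeff_mk, Pi.one_apply]
  have hone := congrArg (PowerSeries.expand q hq) (PowerSeries.mk_one_mul_one_sub_eq_one ℚ)
  rw [map_mul, map_sub, map_one, PowerSeries.expand_X] at hone
  rw [hs, hone]

lemma expand_mk (hf : IsHilbertQuasipolynomial q s f) (hq : q ≠ 0) (hs : s ≠ 0) {r : ℕ}
    (hr : r ≠ 0) :
    PowerSeries.expand r hr (PowerSeries.mk fun z : ℕ => (f z : ℚ)) =
      (1 - PowerSeries.X ^ (r * s))⁻¹ * (1 - PowerSeries.X ^ (r * q))⁻¹ := by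
  rw [PowerSeries.eq_mul_inv_iff_mul_eq (by simp [hr, hq]),
    PowerSeries.eq_inv_iff_mul_eq_one (by simp [hr, hs]), mul_right_comm]
  have hmul := congrArg (PowerSeries.expand r hr) (hf.mk_mul_one_sub_mul_one_sub hq)
  simpa only [map_mul, map_sub, map_one, map_pow, PowerSeries.expand_X, ← pow_mul] using hmul

end IsHilbertQuasipolynomial

variable {F : Type} [Field F] [Fintype F] {H : Subgroup (GL (Fin 2) F)} {s : ℕ} {f : ℤ → ℤ}
  {d : MvPolynomial (Fin 2) F}

lemma IsBoundaryGenerator.finrank_invariantForms_eq (hH : borelSubgroup F ≤ H)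
    (hd : IsBoundaryGenerator H (s * (Fintype.card F - 1)) d)
    (hf : IsHilbertQuasipolynomial (Fintype.card F) s f) (hs : s ≠ 0) (k : ℕ) :
    (Module.finrank F (invariantForms H ((Fintype.card F - 1) * k)) : ℤ) = f k := by
  have hr : 0 < Fintype.card F - 1 := Nat.sub_pos_of_lt Fintype.one_lt_card
  refine hf.eq_of_recurrence hs
    (p := fun k => Module.finrank F (invariantForms H ((Fintype.card F - 1) * k))) (fun k => ?_) k
  rw [hd.finrank_invariantForms hH, mul_comm s, mul_comm (Fintype.card F), ← Nat.mul_sub]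
  simp only [Nat.mul_dvd_mul_iff_left hr, Nat.mul_le_mul_left_iff hr]

lemma IsTransferGenerator.finrank_invariantFunctionals_eq
    (hd : IsTransferGenerator H (s * (Fintype.card F - 1)) d)
    (hforms : ∀ k : ℕ,
      (Module.finrank F (invariantForms H ((Fintype.card F - 1) * k)) : ℤ) = f k)
    (hann : ∀ k : ℕ,
      (Module.finrank F (annihilatingFunctionals H d ((Fintype.card F - 1) * k)) : ℤ) =
        1 + if k < 2 * s then f (k - 2 * s) else 0) (k : ℕ) :
    (Module.finrank F (invariantFunctionals H ((Fintype.card F - 1) * k)) : ℤ) =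
      1 + f (k - 2 * s) := by
  have hr : 0 < Fintype.card F - 1 := Nat.sub_pos_of_lt Fintype.one_lt_card
  have hmul : 2 * (s * (Fintype.card F - 1)) = (Fintype.card F - 1) * (2 * s) := by ring
  rcases lt_or_ge k (2 * s) with hk | hk
  · rw [hd.invariantFunctionals_eq_annihilatingFunctionals
      (hmul ▸ (Nat.mul_lt_mul_left hr).2 hk), hann, if_pos hk]
  · obtain ⟨j, rfl⟩ := Nat.exists_eq_add_of_le hk
    have hrank := hd.finrank_invariantFunctionals ((Fintype.card F - 1) * j)
    rw [hmul, ← mul_add] at hrank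
    rw [hrank, Nat.cast_add, hann, if_neg hk.not_gt, hforms]
    push_cast
    ring_nf

theorem mk_finrank_truncatedInvariants (hH : borelSubgroup F ≤ H)
    (hB : IsBoundaryGenerator H (s * (Fintype.card F - 1)) d)
    (hT : IsTransferGenerator H (s * (Fintype.card F - 1)) d)
    (hf : IsHilbertQuasipolynomial (Fintype.card F) s f) (hs : s ≠ 0)
    (hann : ∀ k : ℕ,
      (Module.finrank F (annihilatingFunctionals H d ((Fintype.card F - 1) * k)) : ℤ) =
        1 + if k < 2 * s then f (k - 2 * s) else 0) (m : ℕ) :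
    PowerSeries.mk (fun e =>
        (Module.finrank F (truncatedInvariants (Fintype.card F ^ m) H e) : ℚ)) =
      PowerSeries.C (f 0 : ℚ) * PowerSeries.X ^ (2 * (Fintype.card F ^ m - 1)) +
      (PowerSeries.C (f 0 : ℚ) * PowerSeries.X ^ (Fintype.card F ^ m - Fintype.card F) +
          PowerSeries.C (f 1 : ℚ) * PowerSeries.X ^ (Fintype.card F ^ m - 1)) *
        ((1 - PowerSeries.X ^ (Fintype.card F ^ m - 1)) *
          (1 - PowerSeries.X ^ (Fintype.card F - 1))⁻¹) +
      (1 - PowerSeries.X ^ (Fintype.card F ^ m - 1)) *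
          (1 - PowerSeries.X ^ (Fintype.card F ^ m - Fintype.card F)) *
        ((1 - PowerSeries.X ^ (s * (Fintype.card F - 1)))⁻¹ *
          (1 - PowerSeries.X ^ (Fintype.card F * (Fintype.card F - 1)))⁻¹) := by
  have hr : Fintype.card F - 1 ≠ 0 := (Nat.sub_pos_of_lt Fintype.one_lt_card).ne'
  have hforms := hB.finrank_invariantForms_eq hH hf hs
  obtain ⟨a, ha⟩ : ∃ a, a = ∑ i ∈ Finset.range m, Fintype.card F ^ i := ⟨_, rfl⟩
  have hra : (Fintype.card F - 1) * a = Fintype.card F ^ m - 1 := by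
    rw [ha, mul_comm, geom_sum_mul_of_one_le Fintype.one_lt_card.le]
  have hra' : (Fintype.card F - 1) * (a - 1) = Fintype.card F ^ m - Fintype.card F := by
    have := Fintype.one_lt_card (α := F)
    rw [Nat.mul_sub, hra]
    omega
  have hN : 0 < Fintype.card F ^ m := pow_pos Fintype.card_pos m
  have hsecond := mk_eq_of_second_difference (f := fun z => (f z : ℚ)) (a := a)
    (h := fun z => (Module.finrank F
      (truncatedInvariants (Fintype.card F ^ m) H ((Fintype.card F - 1) * z)) : ℚ))
    (fun z => ?_) (fun z hz => ?_) (fun z k hzk hk => ?_) fun z hz => ?_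
  · rw [mk_eq_expand hr fun e he => by rw [finrank_truncatedInvariants_of_not_dvd
      (fun c => hH (scalar_mem_borelSubgroup c)) he, Nat.cast_zero], hsecond]
    simp only [map_add, map_sub, map_mul, map_pow, map_one, PowerSeries.expand_C,
      PowerSeries.expand_X, ← pow_mul, expand_mk_ite_lt, hf.expand_mk Fintype.card_ne_zero hs,
      mul_left_comm _ 2, hra, hra', mul_comm _ s, mul_comm _ (Fintype.card F)]
  · have hz := hf.second_difference m z
    rw [← show (a : ℤ) = ∑ i ∈ Finset.range m, (Fintype.card F : ℤ) ^ i by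
      rw [ha]; push_cast; rfl] at hz
    exact_mod_cast hz
  · have hlt : (Fintype.card F - 1) * z < Fintype.card F ^ m := by
      have := Nat.mul_le_mul_left (Fintype.card F - 1) hz
      omega
    rw [finrank_truncatedInvariants_of_lt hlt]
    exact_mod_cast hforms z
  · have hlt : (Fintype.card F - 1) * k < Fintype.card F ^ m := by
      have := Nat.mul_le_mul_left (Fintype.card F - 1) hk
      omega
    rw [finrank_truncatedInvariants_of_add_eq hlt (by rw [← mul_add, hzk, ← hra]; ring)]
    have hfun := hT.finrank_invariantFunctionals_eq hforms hann k
    exact_mod_cast hfun.trans (hf.reflection k).symm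
  · have hlt : 2 * (Fintype.card F ^ m - 1) < (Fintype.card F - 1) * z := by
      rw [← hra, mul_left_comm]
      exact (Nat.mul_lt_mul_left hr.bot_lt).2 hz
    rw [finrank_truncatedInvariants_of_lt_degree hlt, Nat.cast_zero]

end HilbertSeries

section Parabolic

variable {F : Type} [Field F]

lemma Pa_one_two : Pa F 2 1 (fun _ => 2) = (⊤ : Subgroup (GL (Fin 2) F)) := by
  refine Set.eq_univ_of_forall fun g r t i _ ht hr => ?_
  simp only [_root_.psum, Finset.sum_const, Finset.card_range, smul_eq_mul] at ht hr
  omega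

lemma Pa_two_one : Pa F 2 2 (fun _ => 1) = borelSubgroup F := by
  ext g
  refine ⟨fun h => h 1 0 1 one_le_two zero_lt_one le_rfl, fun h r t i _ ht hr => ?_⟩
  simp only [_root_.psum, Finset.sum_const, Finset.card_range, smul_eq_mul] at ht hr
  obtain rfl : r = 1 := by omega
  obtain rfl : t = 0 := by omega
  exact h

end Parabolic

section Multinomial

lemma psum_extfn {ℓ : ℕ} (β : Fin ℓ → ℕ) : _root_.psum (extfn ℓ β) ℓ = ∑ i, β i := by
  rw [_root_.psum, Finset.sum_range]
  simp [extfn]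

lemma qtMult_eq_zero_of_lt (q : ℕ) {m ℓ : ℕ} {β : ℕ → ℕ} (h : m < _root_.psum β ℓ) :
    qtMult q m ℓ β = 0 := by
  rw [qtMult, Finset.prod_eq_zero (Finset.mem_range.2 h), zero_mul]
  rw [Nat.sub_self, pow_zero, sub_self]

lemma Cser_eq_sum_Icc (q m ℓ : ℕ) (α : ℕ → ℕ) :
    Cser q m ℓ α = ∑ β ∈ Finset.Icc (0 : Fin ℓ → ℕ) fun i => α i,
      PowerSeries.X ^ eexp q m ℓ α (extfn ℓ β) * qtMult q m ℓ (extfn ℓ β) := by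
  refine Finset.sum_filter_of_ne fun β _ hβ => le_of_not_gt fun h => hβ ?_
  rw [qtMult_eq_zero_of_lt q (h.trans_eq (psum_extfn β).symm), mul_zero]

lemma Cser_one_two (q m : ℕ) : Cser q m 1 (fun _ => 2) =
    PowerSeries.X ^ (2 * (q ^ m - 1)) +
      PowerSeries.X ^ (q ^ m - q) *
        ((1 - PowerSeries.X ^ (q ^ m - 1)) * (1 - PowerSeries.X ^ (q - 1))⁻¹) +
      (1 - PowerSeries.X ^ (q ^ m - 1)) * (1 - PowerSeries.X ^ (q ^ m - q)) *
        ((1 - PowerSeries.X ^ (q ^ 2 - 1))⁻¹ * (1 - PowerSeries.X ^ (q ^ 2 - q))⁻¹) := by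
  have hIcc : Finset.Icc (0 : Fin 1 → ℕ) (fun _ => 2) = {![0], ![1], ![2]} := by decide
  rw [Cser_eq_sum_Icc, hIcc, Finset.sum_insert (by decide), Finset.sum_insert (by decide),
    Finset.sum_singleton]
  simp [eexp, qtMult, extfn, _root_.psum, Finset.prod_range_succ, add_assoc]

lemma Cser_two_one (q m : ℕ) : Cser q m 2 (fun _ => 1) =
    PowerSeries.X ^ (2 * (q ^ m - 1)) +
      (PowerSeries.X ^ (q ^ m - q) + PowerSeries.X ^ (q ^ m - 1)) *
        ((1 - PowerSeries.X ^ (q ^ m - 1)) * (1 - PowerSeries.X ^ (q - 1))⁻¹) +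
      (1 - PowerSeries.X ^ (q ^ m - 1)) * (1 - PowerSeries.X ^ (q ^ m - q)) *
        ((1 - PowerSeries.X ^ (q - 1))⁻¹ * (1 - PowerSeries.X ^ (q ^ 2 - q))⁻¹) := by
  have hIcc : Finset.Icc (0 : Fin 2 → ℕ) (fun _ => 1) =
      {![0, 0], ![1, 0], ![0, 1], ![1, 1]} := by decide
  rw [Cser_eq_sum_Icc, hIcc, Finset.sum_insert (by decide), Finset.sum_insert (by decide),
    Finset.sum_insert (by decide), Finset.sum_singleton]
  simp [eexp, qtMult, extfn, _root_.psum, Finset.sum_range_succ, Finset.prod_range_succ]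
  ring

end Multinomial

section MainTheorem

variable (F : Type) [Field F] [Fintype F]

lemma finrank_annihilatingFunctionals_borelSubgroup_eq_one_add (k : ℕ) :
    (Module.finrank F (annihilatingFunctionals (borelSubgroup F)
      (MvPolynomial.X 1 ^ (Fintype.card F - 1)) ((Fintype.card F - 1) * k)) : ℤ) =
      1 + if k < 2 * 1 then (k - 2 * (1 : ℕ) : ℤ) / Fintype.card F + 1 else 0 := by
  have hq : 1 < Fintype.card F := Fintype.one_lt_card
  rw [finrank_annihilatingFunctionals_borelSubgroup]
  split_ifs with hk
  · rw [Int.ediv_eq_neg_one_of_neg_of_le (by omega) (by omega)]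
    norm_num
  · norm_num

lemma finrank_annihilatingFunctionals_top_eq_one_add {f : ℤ → ℤ}
    (hf : IsHilbertQuasipolynomial (Fintype.card F) (Fintype.card F + 1) f) (k : ℕ) :
    (Module.finrank F (annihilatingFunctionals (⊤ : Subgroup (GL (Fin 2) F))
      (lineProduct F ^ (Fintype.card F - 1)) ((Fintype.card F - 1) * k)) : ℤ) =
      1 + if k < 2 * (Fintype.card F + 1) then f (k - 2 * (Fintype.card F + 1 : ℕ)) else 0 := by
  have hq : 1 < Fintype.card F := Fintype.one_lt_card
  rw [finrank_annihilatingFunctionals_top]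
  rcases le_or_gt (Fintype.card F + 1) k with hk | hk
  · rw [if_neg (by omega), ite_eq_right_iff.2 fun _ => hf.eq_zero _ (by omega) (by omega)]
    norm_num
  have hdvd : (Fintype.card F : ℤ) ∣ k - (Fintype.card F + 1 : ℕ) ↔ k = 1 := by
    have hsub : (k - (Fintype.card F + 1 : ℕ) : ℤ) = k - 1 - Fintype.card F := by
      push_cast
      ring
    rw [hsub, dvd_sub_self_right]
    refine ⟨fun h => ?_, fun h => by simp [h]⟩
    have := Int.eq_zero_of_abs_lt_dvd h (abs_lt.2 ⟨by omega, by omega⟩)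
    omega
  have hrec := hf.eq_ite_add (k - (Fintype.card F + 1 : ℕ))
  rw [hf.eq_zero _ (by omega) (by omega), sub_sub, ← two_mul] at hrec
  simp only [hdvd] at hrec
  rw [if_pos (c := k < 2 * (Fintype.card F + 1)) (by omega), eq_sub_of_add_eq' hrec.symm]
  split_ifs <;> norm_num

theorem mk_finrank_truncatedInvariants_borelSubgroup (m : ℕ) :
    PowerSeries.mk (fun e => (Module.finrank F
        (truncatedInvariants (Fintype.card F ^ m) (borelSubgroup F) e) : ℚ)) =
      Cser (Fintype.card F) m 2 fun _ => 1 := by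
  have hq : 1 < Fintype.card F := Fintype.one_lt_card
  have hsq : Fintype.card F * (Fintype.card F - 1) = Fintype.card F ^ 2 - Fintype.card F := by
    rw [Nat.mul_sub, mul_one, sq]
  rw [mk_finrank_truncatedInvariants (s := 1) le_rfl
      (by simpa using isBoundaryGenerator_borelSubgroup)
      (by simpa using isTransferGenerator_borelSubgroup)
      (isHilbertQuasipolynomial_one hq) one_ne_zero
      (finrank_annihilatingFunctionals_borelSubgroup_eq_one_add F),
    Cser_two_one, one_mul, hsq]
  simp [Int.ediv_eq_zero_of_lt, hq]

theorem mk_finrank_truncatedInvariants_top (m : ℕ) :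
    PowerSeries.mk (fun e => (Module.finrank F
        (truncatedInvariants (Fintype.card F ^ m) (⊤ : Subgroup (GL (Fin 2) F)) e) : ℚ)) =
      Cser (Fintype.card F) m 1 fun _ => 2 := by
  have hq : 1 < Fintype.card F := Fintype.one_lt_card
  have hf := isHilbertQuasipolynomial_add_one hq
  have hneg : (-1 : ℤ) / (Fintype.card F + 1) = -1 :=
    Int.ediv_eq_neg_one_of_neg_of_le (by omega) (by omega)
  have hsq : Fintype.card F * (Fintype.card F - 1) = Fintype.card F ^ 2 - Fintype.card F := by
    rw [Nat.mul_sub, mul_one, sq]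
  rw [mk_finrank_truncatedInvariants le_top isBoundaryGenerator_top isTransferGenerator_top hf
      (Nat.succ_ne_zero _) (finrank_annihilatingFunctionals_top_eq_one_add F hf),
    Cser_one_two, ← Nat.sq_sub_sq, one_pow, hsq]
  simp [hneg, Int.ediv_eq_zero_of_lt, hq]

end MainTheorem

/-- Theorem (the bivariate case of the main conjecture): for `Q = F_q[x,y]/(x^{q^m},y^{q^m})`
and for both compositions `α = (2)` and `α = (1,1)` of `n = 2` (so `P_{(2)} = GL_2(F_q)` and
`P_{(1,1)}` is the Borel subgroup), one has `Hilb(Q^{P_α},t) = C_{α,m}(t)`. -/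
theorem statement19 (q m : ℕ) (hq : IsPrimePow q) (Fq : Type) [Field Fq] [Fintype Fq]
    (hcard : Fintype.card Fq = q) :
    ((PowerSeries.mk fun d =>
        (Module.finrank Fq
          (Submodule.map (frobPow Fq 2 (q ^ m)).mkQ
            (fixDeg Fq 2 (q ^ m) (Pa Fq 2 1 fun _ => 2) d)) : ℚ))
      = Cser q m 1 fun _ => 2) ∧
    ((PowerSeries.mk fun d =>
        (Module.finrank Fq
          (Submodule.map (frobPow Fq 2 (q ^ m)).mkQ
            (fixDeg Fq 2 (q ^ m) (Pa Fq 2 2 fun _ => 1) d)) : ℚ))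
      = Cser q m 2 fun _ => 1) := by
  subst hcard
  rw [Pa_one_two, Pa_two_one]
  exact ⟨mk_finrank_truncatedInvariants_top Fq m,
    mk_finrank_truncatedInvariants_borelSubgroup Fq m⟩
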